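/- Under the stated assumptions, for every real β ≥ 0, the absolute central moments of Y_N satisfy E|Y_N − μ log N|^{β} ∼ 2^{β/2} π^{−1/2} Γ((β+1)/2) σ^{β} (log N)^{β/2} as N → ∞, where E|Y_N − μ log N|^{β} = (1/A(N)) Σ_{1≤n≤N} Σ_{m≥0} a_m(n) |m − μ log N|^{β}. -/

import Mathlib

open scoped BigOperators ENNReal
open Filter Asymptotics

noncomputable section

/-- `af P m n` is the number of ordered `m`-tuples `(n₁,…,n_m)` of elements of `P`
with product `n` (so `af P 0 n = 1` iff `n = 1`). -/
def af (P : Set ℕ) (m n : ℕ) : ℕ :=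
  Nat.card {t : Fin m → ℕ // (∀ i, t i ∈ P) ∧ ∏ i, t i = n}

/-- `aTot P n = a(n) = Σ_{m ≥ 0} a_m(n)`. -/
def aTot (P : Set ℕ) (n : ℕ) : ℝ := ∑' m : ℕ, (af P m n : ℝ)

/-- `Acum P N = A(N) = Σ_{1 ≤ n ≤ N} a(n)`. -/
def Acum (P : Set ℕ) (N : ℕ) : ℝ := ∑ n ∈ Finset.Icc 1 N, aTot P n

/-- The Dirichlet series `𝒫(x) = Σ_{n ∈ 𝒫} n^{-x}` at a real point. -/
def Pval (P : Set ℕ) (x : ℝ) : ℝ := ∑' n : P, ((n : ℕ) : ℝ) ^ (-x)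

/-- `𝒫'(x) = -Σ_{n ∈ 𝒫} n^{-x} log n`. -/
def Pderiv1 (P : Set ℕ) (x : ℝ) : ℝ := -∑' n : P, ((n : ℕ) : ℝ) ^ (-x) * Real.log (n : ℕ)

/-- `𝒫''(x) = Σ_{n ∈ 𝒫} n^{-x} (log n)^2`. -/
def Pderiv2 (P : Set ℕ) (x : ℝ) : ℝ := ∑' n : P, ((n : ℕ) : ℝ) ^ (-x) * (Real.log (n : ℕ)) ^ 2

/-- The abscissa of convergence `κ` of the Dirichlet series of `P`, as an extended real
(`⊥` when `P` is finite). -/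
def kappa (P : Set ℕ) : EReal :=
  sInf {x : EReal | ∃ r : ℝ, x = (r : EReal) ∧ Summable (fun n : P => ((n : ℕ) : ℝ) ^ (-r))}

open Classical in
/-- The (possibly infinite) value `𝒫(x) ∈ (0,∞]` of the Dirichlet series at an
extended-real point; at `x = -∞` every term `n^{-x}` is infinite. -/
def PvalE (P : Set ℕ) (x : EReal) : ℝ≥0∞ :=
  if x = ⊥ then ⊤ else ∑' n : P, ENNReal.ofReal (((n : ℕ) : ℝ) ^ (-x.toReal))

/-!
Choosing the factors `p ∈ 𝒫` independently with probability `p ^ (-ρ)` turns ordered factorizations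
into a random walk with steps `log p`: the number of `m`-fold factorizations of integers up to
`exp x` equals `exp (ρ x)` times the `m`-th term of the solution of a renewal equation. By the
renewal theorem that solution is asymptotic to a positive profile which the steps leave invariant,
so the probability of using at least `k` factors reduces to that of the first `k` steps staying
below `x`, and the central limit theorem for the steps becomes one for the number of factors.
Exponentially tilting the step law bounds the exponential moments of the normalized count, which
upgrades convergence in law to convergence of all absolute moments.
-/

namespace OrderedFactorization

open MeasureTheory ProbabilityTheory Topology

section StepAverage

variable {π : Measure ℝ} {f g : ℝ → ℝ} {C c : ℝ}

/-- The expectation of `f (x - S)` for a random step `S` of law `π`, i.e. the convolution of the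
measure `π` with the function `f`. -/
def stepAverage (π : Measure ℝ) (f : ℝ → ℝ) (x : ℝ) : ℝ := ∫ s, f (x - s) ∂π

lemma integrable_comp_sub [IsFiniteMeasure π] (hf : Measurable f) (hC : ∀ x, |f x| ≤ C) (x : ℝ) :
    Integrable (fun s => f (x - s)) π :=
  Integrable.of_bound (hf.comp (by fun_prop)).aestronglyMeasurable C
    (Eventually.of_forall fun s => hC (x - s))

lemma measurable_stepAverage [SFinite π] (hf : Measurable f) : Measurable (stepAverage π f) :=
  (StronglyMeasurable.integral_prod_right
    (f := fun x s => f (x - s)) (by fun_prop : Measurable _).stronglyMeasurable).measurable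

lemma abs_stepAverage_le [IsProbabilityMeasure π] (hC : ∀ x, |f x| ≤ C) (x : ℝ) :
    |stepAverage π f x| ≤ C := by
  simpa [stepAverage] using norm_integral_le_of_norm_le_const (μ := π) (f := fun s => f (x - s))
    (Eventually.of_forall fun s => hC (x - s))

lemma stepAverage_nonneg (hf : ∀ x, 0 ≤ f x) (x : ℝ) : 0 ≤ stepAverage π f x :=
  integral_nonneg fun s => hf (x - s)

lemma stepAverage_sub [IsFiniteMeasure π] {C' : ℝ} (hf : Measurable f) (hC : ∀ x, |f x| ≤ C)
    (hg : Measurable g) (hC' : ∀ x, |g x| ≤ C') (x : ℝ) :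
    stepAverage π (fun y => f y - g y) x = stepAverage π f x - stepAverage π g x :=
  integral_sub (integrable_comp_sub hf hC x) (integrable_comp_sub hg hC' x)

lemma stepAverage_mul_left {x a : ℝ} {φ : ℝ → ℝ} (hφ : ∀ᵐ s ∂π, φ (x - s) = a) :
    stepAverage π (fun y => φ y * f y) x = a * stepAverage π f x := by
  rw [stepAverage, stepAverage, ← integral_const_mul]
  refine integral_congr_ae ?_
  filter_upwards [hφ] with s hs
  rw [hs]

lemma monotone_exp_mul_stepAverage [IsFiniteMeasure π] {ρ : ℝ} (hf : Measurable f)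
    (hC : ∀ x, |f x| ≤ C) (hmono : Monotone fun x => Real.exp (ρ * x) * f x) :
    Monotone fun x => Real.exp (ρ * x) * stepAverage π f x := by
  have hexp (x s : ℝ) : Real.exp (ρ * x) * f (x - s)
      = Real.exp (ρ * s) * (Real.exp (ρ * (x - s)) * f (x - s)) := by
    rw [← mul_assoc, ← Real.exp_add]
    ring_nf
  intro x y hxy
  simp only [stepAverage, ← integral_const_mul]
  refine integral_mono ((integrable_comp_sub hf hC x).const_mul _)
    ((integrable_comp_sub hf hC y).const_mul _) fun s => ?_
  simp only [hexp]
  exact mul_le_mul_of_nonneg_left (hmono (sub_le_sub_right hxy s)) (Real.exp_pos _).le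

lemma tendsto_stepAverage_atTop [IsProbabilityMeasure π] (hf : Measurable f)
    (hC : ∀ x, |f x| ≤ C) (hlim : Tendsto f atTop (𝓝 c)) :
    Tendsto (stepAverage π f) atTop (𝓝 c) := by
  have hconst : ∫ _, c ∂π = c := by simp
  rw [← hconst]
  refine tendsto_integral_filter_of_dominated_convergence (fun _ => C)
    (Eventually.of_forall fun x => (hf.comp (by fun_prop)).aestronglyMeasurable)
    (Eventually.of_forall fun x => Eventually.of_forall fun s => hC (x - s))
    (integrable_const C) (Eventually.of_forall fun s => ?_)
  exact hlim.comp (tendsto_atTop_add_const_right _ (-s) tendsto_id)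

end StepAverage

section ConvPow

variable {π : Measure ℝ} {f : ℝ → ℝ} {C : ℝ}

/-- The `k`-fold convolution power of `π`, i.e. the law of a sum of `k` independent steps of
law `π`. -/
def convPow (π : Measure ℝ) : ℕ → Measure ℝ
  | 0 => Measure.dirac 0
  | k + 1 => π ∗ convPow π k

instance isProbabilityMeasure_convPow [IsProbabilityMeasure π] (k : ℕ) :
    IsProbabilityMeasure (convPow π k) := by
  induction k with
  | zero => exact Measure.dirac.isProbabilityMeasure
  | succ k ih => exact inferInstanceAs (IsProbabilityMeasure (π ∗ convPow π k))

lemma stepAverage_convPow_zero (f : ℝ → ℝ) : stepAverage (convPow π 0) f = f := by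
  funext x
  simp [stepAverage, convPow]

lemma stepAverage_convPow_succ [IsProbabilityMeasure π] (hf : Measurable f)
    (hC : ∀ x, |f x| ≤ C) (k : ℕ) :
    stepAverage (convPow π (k + 1)) f = stepAverage π (stepAverage (convPow π k) f) := by
  funext x
  have hint : Integrable (fun s => f (x - s)) (π ∗ convPow π k) := integrable_comp_sub hf hC x
  simp_rw [stepAverage, convPow, integral_conv hint, sub_add_eq_sub_sub]

lemma stepAverage_convPow_eq_zero [IsProbabilityMeasure π] {ℓ : ℝ} (hπ : ∀ᵐ s ∂π, ℓ ≤ s)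
    (hf : Measurable f) (hC : ∀ x, |f x| ≤ C) (hf0 : ∀ x < 0, f x = 0) (k : ℕ) :
    ∀ x < k * ℓ, stepAverage (convPow π k) f x = 0 := by
  induction k with
  | zero => simpa [stepAverage_convPow_zero] using hf0
  | succ k ih =>
    intro x hx
    rw [stepAverage_convPow_succ hf hC]
    refine integral_eq_zero_of_ae ?_
    filter_upwards [hπ] with s hs
    refine ih _ ?_
    push_cast at hx
    linarith

lemma stepAverage_convPow_mul_left [IsProbabilityMeasure π] {φ : ℝ → ℝ} {C' : ℝ}
    (hφ : Measurable φ) (hC' : ∀ x, |φ x| ≤ C') (hφπ : ∀ x, ∀ᵐ s ∂π, φ (x - s) = φ x)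
    (hf : Measurable f) (hC : ∀ x, |f x| ≤ C) (k : ℕ) (x : ℝ) :
    stepAverage (convPow π k) (fun y => φ y * f y) x
      = φ x * stepAverage (convPow π k) f x := by
  have hbound : ∀ y, |φ y * f y| ≤ C' * C := fun y => by
    rw [abs_mul]
    exact mul_le_mul (hC' y) (hC y) (abs_nonneg _) ((abs_nonneg _).trans (hC' y))
  induction k generalizing x with
  | zero => simp [stepAverage_convPow_zero]
  | succ k ih =>
    rw [stepAverage_convPow_succ (by fun_prop) hbound, stepAverage_convPow_succ hf hC, funext ih]
    exact stepAverage_mul_left (hφπ x)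

end ConvPow

section RenewalFunction

variable {π : Measure ℝ} {ℓ ρ : ℝ}

/-- The one-sided exponential density `exp (-ρ x)` on `[0, ∞)`, the forcing term of the renewal
equation. -/
def expDecay (ρ : ℝ) : ℝ → ℝ := (Set.Ici 0).indicator fun x => Real.exp (-ρ * x)

lemma measurable_expDecay (ρ : ℝ) : Measurable (expDecay ρ) :=
  Measurable.indicator (by fun_prop) measurableSet_Ici

lemma expDecay_of_neg {x : ℝ} (hx : x < 0) : expDecay ρ x = 0 :=
  Set.indicator_of_notMem (by simpa using hx) _

lemma expDecay_of_nonneg {x : ℝ} (hx : 0 ≤ x) : expDecay ρ x = Real.exp (-ρ * x) :=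
  Set.indicator_of_mem (Set.mem_Ici.2 hx) _

lemma expDecay_nonneg (x : ℝ) : 0 ≤ expDecay ρ x :=
  Set.indicator_nonneg (fun _ _ => (Real.exp_pos _).le) x

lemma expDecay_le_one (hρ : 0 ≤ ρ) (x : ℝ) : expDecay ρ x ≤ 1 := by
  refine Set.indicator_apply_le' (fun hx => ?_) fun _ => zero_le_one
  exact Real.exp_le_one_iff.2 (by nlinarith [Set.mem_Ici.1 hx])

lemma abs_expDecay_le_one (hρ : 0 ≤ ρ) (x : ℝ) : |expDecay ρ x| ≤ 1 := by
  rw [abs_of_nonneg (expDecay_nonneg x)]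
  exact expDecay_le_one hρ x

lemma monotone_exp_mul_expDecay (ρ : ℝ) : Monotone fun x => Real.exp (ρ * x) * expDecay ρ x := by
  intro x y hxy
  rcases lt_or_ge x 0 with hx | hx
  · simp only [expDecay_of_neg hx, mul_zero]
    exact mul_nonneg (Real.exp_pos _).le (expDecay_nonneg y)
  · simp [expDecay_of_nonneg hx, expDecay_of_nonneg (hx.trans hxy), ← Real.exp_add]

/-- The contribution of exactly `m` steps to the renewal function: the convolution of the law of
the `m`-th partial sum with `expDecay ρ`. -/
def renewalTerm (π : Measure ℝ) (ρ : ℝ) (m : ℕ) : ℝ → ℝ := stepAverage (convPow π m) (expDecay ρ)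

/-- The solution `v` of the renewal equation `v = expDecay ρ + π ∗ v`. -/
def renewalFun (π : Measure ℝ) (ρ x : ℝ) : ℝ := ∑' m, renewalTerm π ρ m x

lemma renewalTerm_zero : renewalTerm π ρ 0 = expDecay ρ := stepAverage_convPow_zero _

lemma renewalTerm_nonneg (m : ℕ) (x : ℝ) : 0 ≤ renewalTerm π ρ m x :=
  stepAverage_nonneg expDecay_nonneg x

lemma renewalFun_nonneg (x : ℝ) : 0 ≤ renewalFun π ρ x :=
  tsum_nonneg fun m => renewalTerm_nonneg m x

variable [IsProbabilityMeasure π]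

lemma measurable_renewalTerm (m : ℕ) : Measurable (renewalTerm π ρ m) :=
  measurable_stepAverage (measurable_expDecay ρ)

lemma abs_renewalTerm_le_one (hρ : 0 ≤ ρ) (m : ℕ) (x : ℝ) : |renewalTerm π ρ m x| ≤ 1 :=
  abs_stepAverage_le (abs_expDecay_le_one hρ) x

lemma renewalTerm_succ (hρ : 0 ≤ ρ) (m : ℕ) :
    renewalTerm π ρ (m + 1) = stepAverage π (renewalTerm π ρ m) :=
  stepAverage_convPow_succ (measurable_expDecay ρ) (abs_expDecay_le_one hρ) m

lemma stepAverage_convPow_renewalTerm (hρ : 0 ≤ ρ) (m k : ℕ) :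
    stepAverage (convPow π k) (renewalTerm π ρ m) = renewalTerm π ρ (m + k) := by
  induction k with
  | zero => exact stepAverage_convPow_zero _
  | succ k ih =>
    rw [stepAverage_convPow_succ (measurable_renewalTerm m) (abs_renewalTerm_le_one hρ m), ih,
      ← renewalTerm_succ hρ, add_assoc]

lemma monotone_exp_mul_renewalTerm (hρ : 0 ≤ ρ) (m : ℕ) :
    Monotone fun x => Real.exp (ρ * x) * renewalTerm π ρ m x :=
  monotone_exp_mul_stepAverage (measurable_expDecay ρ) (abs_expDecay_le_one hρ)
    (monotone_exp_mul_expDecay ρ)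

lemma renewalTerm_eq_zero (hπ : ∀ᵐ s ∂π, ℓ ≤ s) (hρ : 0 ≤ ρ) {m : ℕ} {x : ℝ} (hx : x < m * ℓ) :
    renewalTerm π ρ m x = 0 :=
  stepAverage_convPow_eq_zero hπ (measurable_expDecay ρ) (abs_expDecay_le_one hρ)
    (fun _ => expDecay_of_neg) m x hx

lemma measurable_renewalFun : Measurable (renewalFun π ρ) :=
  Measurable.tsum fun m => measurable_renewalTerm m

section PositiveSteps

variable (hℓ : 0 < ℓ) (hπ : ∀ᵐ s ∂π, ℓ ≤ s)

include hℓ hπ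

lemma renewalTerm_of_neg (hρ : 0 ≤ ρ) (m : ℕ) {x : ℝ} (hx : x < 0) : renewalTerm π ρ m x = 0 :=
  renewalTerm_eq_zero hπ hρ (hx.trans_le (by positivity))

lemma renewalFun_of_neg (hρ : 0 ≤ ρ) {x : ℝ} (hx : x < 0) : renewalFun π ρ x = 0 := by
  simp only [renewalFun, renewalTerm_of_neg hℓ hπ hρ _ hx, tsum_zero]

lemma eventually_renewalTerm_eq_zero (hρ : 0 ≤ ρ) (x : ℝ) :
    ∀ᶠ m in atTop, renewalTerm π ρ m x = 0 := by
  filter_upwards [(tendsto_natCast_atTop_atTop.atTop_mul_const hℓ).eventually_gt_atTop x] with m hm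
  exact renewalTerm_eq_zero hπ hρ hm

lemma summable_renewalTerm_mul (hρ : 0 ≤ ρ) (x : ℝ) (g : ℕ → ℝ) :
    Summable fun m => renewalTerm π ρ m x * g m := by
  obtain ⟨K, hK⟩ := eventually_atTop.1 (eventually_renewalTerm_eq_zero hℓ hπ hρ x)
  refine summable_of_ne_finset_zero (s := Finset.range K) fun m hm => ?_
  rw [hK m (by simpa using hm), zero_mul]

lemma summable_renewalTerm (hρ : 0 ≤ ρ) (x : ℝ) : Summable fun m => renewalTerm π ρ m x := by
  simpa using summable_renewalTerm_mul hℓ hπ hρ x 1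

lemma sum_range_renewalTerm_le (hρ : 0 < ρ) (k : ℕ) (x : ℝ) :
    ∑ m ∈ Finset.range k, renewalTerm π ρ m x
      ≤ (1 - Real.exp (-ρ * ℓ))⁻¹ * max 0 (1 - Real.exp (-ρ * (x + ℓ))) := by
  have hE : Real.exp (-ρ * ℓ) < 1 := Real.exp_lt_one_iff.2 (by nlinarith)
  have hinv : (1 - Real.exp (-ρ * ℓ))⁻¹ * (1 - Real.exp (-ρ * ℓ)) = 1 :=
    inv_mul_cancel₀ (sub_pos.2 hE).ne'
  set K := (1 - Real.exp (-ρ * ℓ))⁻¹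
  have hK : 0 ≤ K := inv_nonneg.2 (sub_pos.2 hE).le
  induction k generalizing x with
  | zero => simpa using mul_nonneg hK (le_max_left _ _)
  | succ k ih =>
    have hint (m : ℕ) : Integrable (fun s => renewalTerm π ρ m (x - s)) π :=
      integrable_comp_sub (measurable_renewalTerm m) (abs_renewalTerm_le_one hρ.le m) x
    have hstep : ∑ m ∈ Finset.range k, renewalTerm π ρ (m + 1) x
        ≤ K * max 0 (1 - Real.exp (-ρ * x)) := by
      simp only [renewalTerm_succ hρ.le, stepAverage]
      rw [← integral_finsetSum _ fun m _ => hint m]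
      refine (integral_mono_ae (integrable_finsetSum _ fun m _ => hint m)
        (integrable_const (K * max 0 (1 - Real.exp (-ρ * x)))) ?_).trans_eq (by simp)
      filter_upwards [hπ] with s hs
      refine (ih (x - s)).trans (mul_le_mul_of_nonneg_left (max_le_max_left 0 ?_) hK)
      exact sub_le_sub_left (Real.exp_le_exp.2 (by nlinarith)) 1
    rw [Finset.sum_range_succ', renewalTerm_zero]
    rcases lt_or_ge x 0 with hx | hx
    · have h1 : 1 - Real.exp (-ρ * x) ≤ 0 := sub_nonpos.2 (Real.one_le_exp (by nlinarith))
      rw [max_eq_left h1, mul_zero] at hstep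
      rw [expDecay_of_neg hx, add_zero]
      exact hstep.trans (mul_nonneg hK (le_max_left _ _))
    · have hx1 : Real.exp (-ρ * x) ≤ 1 := Real.exp_le_one_iff.2 (by nlinarith)
      rw [max_eq_right (sub_nonneg.2 hx1)] at hstep
      calc _ ≤ K * (1 - Real.exp (-ρ * x)) + Real.exp (-ρ * x) := by
            rw [expDecay_of_nonneg hx]
            exact add_le_add_left hstep _
        _ = K * (1 - Real.exp (-ρ * (x + ℓ))) := by
            rw [mul_add (-ρ), Real.exp_add]
            linear_combination (-Real.exp (-ρ * x)) * hinv
        _ ≤ _ := mul_le_mul_of_nonneg_left (le_max_right _ _) hK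

lemma renewalFun_le (hρ : 0 < ρ) (x : ℝ) : renewalFun π ρ x ≤ (1 - Real.exp (-ρ * ℓ))⁻¹ := by
  have hE : Real.exp (-ρ * ℓ) < 1 := Real.exp_lt_one_iff.2 (by nlinarith)
  refine Real.tsum_le_of_sum_range_le (fun m => renewalTerm_nonneg m x) fun k => ?_
  refine (sum_range_renewalTerm_le hℓ hπ hρ k x).trans ?_
  refine mul_le_of_le_one_right (inv_nonneg.2 (sub_pos.2 hE).le) (max_le zero_le_one ?_)
  exact sub_le_self _ (Real.exp_pos _).le

lemma abs_renewalFun_le (hρ : 0 < ρ) (x : ℝ) : |renewalFun π ρ x| ≤ (1 - Real.exp (-ρ * ℓ))⁻¹ := by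
  rw [abs_of_nonneg (renewalFun_nonneg x)]
  exact renewalFun_le hℓ hπ hρ x

lemma monotone_exp_mul_renewalFun (hρ : 0 ≤ ρ) :
    Monotone fun x => Real.exp (ρ * x) * renewalFun π ρ x := by
  intro x y hxy
  simp only [renewalFun, ← tsum_mul_left]
  exact ((summable_renewalTerm hℓ hπ hρ x).mul_left _).tsum_le_tsum
    (fun m => monotone_exp_mul_renewalTerm hρ m hxy) ((summable_renewalTerm hℓ hπ hρ y).mul_left _)

lemma renewalFun_pos (hρ : 0 ≤ ρ) {x : ℝ} (hx : 0 ≤ x) : 0 < renewalFun π ρ x := by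
  refine (summable_renewalTerm hℓ hπ hρ x).tsum_pos (fun m => renewalTerm_nonneg m x) 0 ?_
  rw [renewalTerm_zero, expDecay_of_nonneg hx]
  exact Real.exp_pos _

lemma stepAverage_convPow_renewalFun (hρ : 0 ≤ ρ) (k : ℕ) (x : ℝ) :
    stepAverage (convPow π k) (renewalFun π ρ) x = ∑' m, renewalTerm π ρ (m + k) x := by
  have hint (m : ℕ) : Integrable (fun s => renewalTerm π ρ m (x - s)) (convPow π k) :=
    integrable_comp_sub (measurable_renewalTerm m) (abs_renewalTerm_le_one hρ m) x
  have hterm (m : ℕ) :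
      ∫ s, renewalTerm π ρ m (x - s) ∂convPow π k = renewalTerm π ρ (m + k) x :=
    congrFun (stepAverage_convPow_renewalTerm hρ m k) x
  have hsum := hasSum_integral_of_summable_integral_norm hint (by
    simp only [Real.norm_of_nonneg (renewalTerm_nonneg _ _), hterm]
    exact (summable_nat_add_iff k).2 (summable_renewalTerm hℓ hπ hρ x))
  simp only [hterm] at hsum
  exact hsum.tsum_eq.symm

lemma renewalFun_eq_add_stepAverage (hρ : 0 ≤ ρ) (x : ℝ) :
    renewalFun π ρ x = expDecay ρ x + stepAverage π (renewalFun π ρ) x := by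
  have hone : convPow π 1 = π := Measure.conv_dirac_zero π
  have htail := stepAverage_convPow_renewalFun hℓ hπ hρ 1 x
  rw [hone] at htail
  rw [htail, renewalFun, (summable_renewalTerm hℓ hπ hρ x).tsum_eq_zero_add, renewalTerm_zero]

end PositiveSteps

end RenewalFunction

section AsymptoticPeriods

variable {h f : ℝ → ℝ} {C a u : ℝ}

/-- The shifts `u` under which `h` is asymptotically invariant at `+∞`. -/
def asymptoticPeriods (h : ℝ → ℝ) : AddSubgroup ℝ where
  carrier := {u | Tendsto (fun x => h x - h (x - u)) atTop (𝓝 0)}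
  zero_mem' := by simp
  add_mem' {u w} hu hw := by
    have hsum := Tendsto.add hu (hw.comp (tendsto_atTop_add_const_right atTop (-u) tendsto_id))
    rw [add_zero] at hsum
    refine hsum.congr fun x => ?_
    simp only [Function.comp_apply, id, ← sub_eq_add_neg, sub_add_sub_cancel, sub_sub]
  neg_mem' {u} hu := by
    have hneg := (Tendsto.comp hu (tendsto_atTop_add_const_right atTop u tendsto_id)).neg
    rw [neg_zero] at hneg
    refine hneg.congr fun x => ?_
    simp

lemma mem_asymptoticPeriods :
    u ∈ asymptoticPeriods h ↔ Tendsto (fun x => h x - h (x - u)) atTop (𝓝 0) := Iff.rfl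

section Atoms

variable {π : Measure ℝ} [IsProbabilityMeasure π]

lemma measureReal_singleton_mul_le_stepAverage {g : ℝ → ℝ} (hg : Measurable g) (hC : ∀ x, |g x| ≤ C)
    (hg0 : ∀ x, 0 ≤ g x) (x : ℝ) : π.real {a} * g (x - a) ≤ stepAverage π g x := by
  calc π.real {a} * g (x - a) = ∫ s in {a}, g (x - s) ∂π := by simp [Measure.real]
    _ ≤ _ := setIntegral_le_integral (integrable_comp_sub hg hC x)
      (Eventually.of_forall fun s => hg0 (x - s))

/-- Wherever an asymptotically harmonic `g` approaches its upper limit `L`, so does its shift by an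
atom, which carries a fixed share of the average. -/
lemma tendsto_comp_sub_atom {ι : Type*} {F : Filter ι} {X : ι → ℝ} {g : ℝ → ℝ} {L : ℝ}
    (hg : Measurable g) (hC : ∀ x, |g x| ≤ C)
    (hharm : Tendsto (fun x => g x - stepAverage π g x) atTop (𝓝 0)) (ha : π {a} ≠ 0)
    (hL : Tendsto (fun x => max (g x) L) atTop (𝓝 L))
    (hX : Tendsto X F atTop) (hgX : Tendsto (fun i => g (X i)) F (𝓝 L)) :
    Tendsto (fun i => g (X i - a)) F (𝓝 L) := by
  have hα : 0 < π.real {a} := ENNReal.toReal_pos ha (measure_ne_top _ _)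
  have hmax : Measurable fun x => max (g x) L := hg.max measurable_const
  have hmaxC (x : ℝ) : |max (g x) L| ≤ C + |L| := by
    refine abs_max_le_max_abs_abs.trans (max_le ?_ ?_)
    · exact (hC x).trans (le_add_of_nonneg_right (abs_nonneg L))
    · exact le_add_of_nonneg_left ((abs_nonneg _).trans (hC 0))
  have hgap (x : ℝ) : π.real {a} * (max (g (x - a)) L - g (x - a))
      ≤ stepAverage π (fun y => max (g y) L) x - stepAverage π g x := by
    rw [← stepAverage_sub hmax hmaxC hg hC]
    refine measureReal_singleton_mul_le_stepAverage (hmax.sub hg) (C := C + |L| + C) (fun y => ?_)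
      (fun y => sub_nonneg.2 (le_max_left _ _)) x
    exact (abs_sub _ _).trans (add_le_add (hmaxC y) (hC y))
  have hlim : Tendsto (fun i => stepAverage π (fun y => max (g y) L) (X i)
      - stepAverage π g (X i)) F (𝓝 0) := by
    have := ((tendsto_stepAverage_atTop (π := π) hmax hmaxC hL).comp hX).sub
      (hgX.sub (hharm.comp hX))
    simpa using this
  have hzero : Tendsto (fun i => max (g (X i - a)) L - g (X i - a)) F (𝓝 0) := by
    refine squeeze_zero (fun i => sub_nonneg.2 (le_max_left _ _)) (fun i => ?_)
      (by simpa using hlim.const_mul (π.real {a})⁻¹)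
    rw [inv_mul_eq_div, le_div_iff₀ hα, mul_comm]
    exact hgap (X i)
  have hshift : Tendsto (fun i => max (g (X i - a)) L) F (𝓝 L) :=
    hL.comp (tendsto_atTop_add_const_right F (-a) hX)
  simpa using hshift.sub hzero

lemma tendsto_comp_sub_natCast_mul_atom {ι : Type*} {F : Filter ι} {X : ι → ℝ} {g : ℝ → ℝ} {L : ℝ}
    (hg : Measurable g) (hC : ∀ x, |g x| ≤ C)
    (hharm : Tendsto (fun x => g x - stepAverage π g x) atTop (𝓝 0)) (ha : π {a} ≠ 0)
    (hL : Tendsto (fun x => max (g x) L) atTop (𝓝 L))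
    (hX : Tendsto X F atTop) (hgX : Tendsto (fun i => g (X i)) F (𝓝 L)) (j : ℕ) :
    Tendsto (fun i => g (X i - j * a)) F (𝓝 L) := by
  induction j with
  | zero => simpa using hgX
  | succ j ih =>
    have hXj : Tendsto (fun i => X i - j * a) F atTop := tendsto_atTop_add_const_right F _ hX
    refine (tendsto_comp_sub_atom hg hC hharm ha hL hXj ih).congr fun i => ?_
    push_cast
    ring_nf

lemma tendsto_max_limsup {ι : Type*} {F : Filter ι} {g : ι → ℝ}
    (habove : IsBoundedUnder (· ≤ ·) F g) :
    Tendsto (fun i => max (g i) (limsup g F)) F (𝓝 (limsup g F)) := by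
  refine tendsto_order.2 ⟨fun b hb => Eventually.of_forall fun i => lt_max_of_lt_right hb,
    fun b hb => ?_⟩
  filter_upwards [eventually_lt_of_limsup_lt hb habove] with i hi
  exact max_lt hi hb

/-- The increments of a bounded function telescope, so their upper limit along multiples of an atom
cannot be positive. -/
lemma eventually_sub_comp_sub_atom_lt (hh : Measurable h) (hC : ∀ x, |h x| ≤ C)
    (hharm : Tendsto (fun x => h x - stepAverage π h x) atTop (𝓝 0)) (ha : π {a} ≠ 0)
    {ε : ℝ} (hε : 0 < ε) : ∀ᶠ x in atTop, h x - h (x - a) < ε := by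
  set g : ℝ → ℝ := fun x => h x - h (x - a) with hg
  have hshift : Measurable fun x => h (x - a) := hh.comp (by fun_prop)
  have hgC (x : ℝ) : |g x| ≤ C + C := (abs_sub _ _).trans (add_le_add (hC _) (hC _))
  have hgharm : Tendsto (fun x => g x - stepAverage π g x) atTop (𝓝 0) := by
    have := hharm.sub (hharm.comp (tendsto_atTop_add_const_right atTop (-a) tendsto_id))
    rw [sub_zero] at this
    refine this.congr fun x => ?_
    rw [hg, stepAverage_sub hh hC hshift fun y => hC (y - a)]
    simp only [Function.comp_apply, id, stepAverage, ← sub_eq_add_neg, sub_right_comm x a]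
    ring
  have hbelow : IsBoundedUnder (· ≥ ·) atTop g :=
    isBoundedUnder_of ⟨_, fun x => (abs_le.1 (hgC x)).1⟩
  have habove : IsBoundedUnder (· ≤ ·) atTop g :=
    isBoundedUnder_of ⟨_, fun x => (abs_le.1 (hgC x)).2⟩
  set L := limsup g atTop
  suffices hL0 : L ≤ 0 from eventually_lt_of_limsup_lt (hL0.trans_lt hε) habove
  have hmax : Tendsto (fun x => max (g x) L) atTop (𝓝 L) := tendsto_max_limsup habove
  obtain ⟨X, hgX, hX⟩ := exists_seq_tendsto_limsup hbelow.isCoboundedUnder_le habove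
  have hsum (M : ℕ) : Tendsto (fun n => h (X n) - h (X n - M * a)) atTop (𝓝 (M * L)) := by
    have := tendsto_finsetSum (Finset.range M) fun j _ => tendsto_comp_sub_natCast_mul_atom
      (hh.sub hshift) hgC hgharm ha hmax hX hgX j
    simp only [Finset.sum_const, Finset.card_range, nsmul_eq_mul] at this
    refine this.congr fun n => ?_
    have htel := Finset.sum_range_sub' (fun j : ℕ => h (X n - j * a)) M
    simp only [Nat.cast_zero, zero_mul, sub_zero, Nat.cast_succ, add_mul, one_mul, ← sub_sub]
      at htel
    exact htel
  have hbound (M : ℕ) : M * L ≤ C + C := le_of_tendsto' (hsum M) fun n =>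
    (le_abs_self _).trans ((abs_sub _ _).trans (add_le_add (hC _) (hC _)))
  by_contra! hpos
  obtain ⟨M, hM⟩ := exists_nat_gt ((C + C) / L)
  exact ((div_lt_iff₀ hpos).1 hM).not_ge (hbound M)

lemma atom_mem_asymptoticPeriods (hh : Measurable h) (hC : ∀ x, |h x| ≤ C)
    (hharm : Tendsto (fun x => h x - stepAverage π h x) atTop (𝓝 0)) (ha : π {a} ≠ 0) :
    a ∈ asymptoticPeriods h := by
  refine tendsto_order.2 ⟨fun b hb => ?_, fun b hb => ?_⟩
  · have hneg : Tendsto (fun x => -h x - stepAverage π (fun y => -h y) x) atTop (𝓝 0) := by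
      refine (neg_zero (G := ℝ) ▸ hharm.neg).congr fun x => ?_
      simp only [stepAverage, integral_neg, neg_sub, sub_neg_eq_add, neg_add_eq_sub]
    filter_upwards [eventually_sub_comp_sub_atom_lt hh.neg (by simpa using hC) hneg ha
      (neg_pos.2 hb)] with x hx
    simp only [Pi.neg_apply] at hx
    linarith
  · exact eventually_sub_comp_sub_atom_lt hh hC hharm ha hb

end Atoms

lemma asymptoticPeriods_eq_top_of_dense
    (hslow : ∀ ε > 0, ∃ η > 0, ∀ x y, x ≤ y → y ≤ x + η → h x ≤ h y + ε)
    (hdense : Dense (asymptoticPeriods h : Set ℝ)) : asymptoticPeriods h = ⊤ := by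
  refine (AddSubgroup.eq_top_iff' _).2 fun u => tendsto_order.2 ⟨fun b hb => ?_, fun b hb => ?_⟩
  · obtain ⟨η, hη, hslowη⟩ := hslow (-b / 2) (by linarith)
    obtain ⟨w, hw, hw1, hw2⟩ := hdense.exists_between (sub_lt_self u hη)
    filter_upwards [(mem_asymptoticPeriods.1 hw).eventually_const_lt (by linarith : b / 2 < 0)]
      with x hx
    linarith [hslowη (x - u) (x - w) (by linarith) (by linarith)]
  · obtain ⟨η, hη, hslowη⟩ := hslow (b / 2) (half_pos hb)
    obtain ⟨w, hw, hw1, hw2⟩ := hdense.exists_between (lt_add_of_pos_right u hη)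
    filter_upwards [(mem_asymptoticPeriods.1 hw).eventually_lt_const (half_pos hb)] with x hx
    linarith [hslowη (x - w) (x - u) (by linarith) (by linarith)]

/-- The largest multiple of `b` that is at most `x`, for `b > 0`. -/
def latticeFloor (b x : ℝ) : ℝ := b * ⌊x / b⌋

section LatticeFloor

variable {b : ℝ} (hb : 0 < b) (x : ℝ)

lemma measurable_latticeFloor (b : ℝ) : Measurable (latticeFloor b) := by
  unfold latticeFloor
  fun_prop

include hb

lemma latticeFloor_le : latticeFloor b x ≤ x := by
  have := Int.floor_le (x / b)
  rwa [le_div_iff₀' hb] at this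

lemma lt_latticeFloor_add : x < latticeFloor b x + b := by
  have := Int.lt_floor_add_one (x / b)
  rwa [div_lt_iff₀' hb, mul_add, mul_one] at this

lemma latticeFloor_nonneg {x : ℝ} (hx : 0 ≤ x) : 0 ≤ latticeFloor b x :=
  mul_nonneg hb.le (Int.cast_nonneg (Int.floor_nonneg.2 (div_nonneg hx hb.le)))

lemma latticeFloor_sub_of_mem_zmultiples {s : ℝ} (hs : s ∈ AddSubgroup.zmultiples b) :
    latticeFloor b (x - s) = latticeFloor b x - s := by
  obtain ⟨j, rfl⟩ := AddSubgroup.mem_zmultiples_iff.1 hs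
  have : (x - j • b) / b = x / b - j := by
    rw [zsmul_eq_mul]
    field_simp
  rw [latticeFloor, this, Int.floor_sub_intCast, latticeFloor, zsmul_eq_mul]
  push_cast
  ring

lemma latticeFloor_sub_of_mem_Icc (hu : u ∈ Set.Icc 0 b) :
    latticeFloor b (x - u) = latticeFloor b x ∨ latticeFloor b (x - u) = latticeFloor b x - b := by
  have hfrac : 0 ≤ u / b ∧ u / b ≤ 1 := ⟨div_nonneg hu.1 hb.le, (div_le_one hb).2 hu.2⟩
  have hupper : ⌊(x - u) / b⌋ ≤ ⌊x / b⌋ := Int.floor_le_floor (by rw [sub_div]; linarith)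
  have hlower : ⌊x / b⌋ - 1 ≤ ⌊(x - u) / b⌋ := by
    rw [← Int.floor_sub_one]
    exact Int.floor_le_floor (by rw [sub_div]; linarith)
  rcases hupper.eq_or_lt with heq | hlt
  · exact Or.inl (by rw [latticeFloor, heq, latticeFloor])
  · have heq : ⌊(x - u) / b⌋ = ⌊x / b⌋ - 1 := by omega
    right
    rw [latticeFloor, heq, latticeFloor]
    push_cast
    ring

lemma tendsto_latticeFloor_atTop : Tendsto (latticeFloor b) atTop atTop :=
  tendsto_atTop_mono (fun x => (sub_lt_iff_lt_add.2 (lt_latticeFloor_add hb x)).le)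
    (tendsto_atTop_add_const_right atTop (-b) tendsto_id)

lemma asymptoticPeriods_comp_latticeFloor (hper : b ∈ asymptoticPeriods h) :
    asymptoticPeriods (h ∘ latticeFloor b) = ⊤ := by
  have hlattice : Tendsto (fun x => |h (latticeFloor b x) - h (latticeFloor b x - b)|) atTop
      (𝓝 0) := by
    simpa using (hper.comp (tendsto_latticeFloor_atTop hb)).abs
  have hcell {u : ℝ} (hu : u ∈ Set.Icc 0 b) : u ∈ asymptoticPeriods (h ∘ latticeFloor b) := by
    refine squeeze_zero_norm (fun x => ?_) hlattice
    rcases latticeFloor_sub_of_mem_Icc hb x hu with heq | heq <;> simp [heq]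
  refine (AddSubgroup.eq_top_iff' _).2 fun u => ?_
  have hdecomp : u = ⌊u / b⌋ • b + Int.fract (u / b) * b := by
    rw [zsmul_eq_mul, ← add_mul, Int.floor_add_fract, div_mul_cancel₀ _ hb.ne']
  rw [hdecomp]
  refine add_mem (zsmul_mem (hcell ⟨hb.le, le_rfl⟩) _) (hcell ⟨?_, ?_⟩)
  · exact mul_nonneg (Int.fract_nonneg _) hb.le
  · exact mul_le_of_le_one_left hb.le (Int.fract_lt_one _).le

end LatticeFloor

end AsymptoticPeriods

section KeyRenewal

variable {π : Measure ℝ} {h f : ℝ → ℝ} {C : ℝ}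

lemma intervalIntegrable_of_bounded (hh : Measurable h) (hC : ∀ x, |h x| ≤ C) (a b : ℝ) :
    IntervalIntegrable h volume a b :=
  (intervalIntegrable_const (c := C)).mono_fun hh.aestronglyMeasurable
    (Eventually.of_forall fun x => (hC x).trans (le_abs_self C))

lemma abs_intervalIntegral_le_mul (hC : ∀ x, |h x| ≤ C) {s : ℝ} (hs : 0 ≤ s) :
    |∫ u in 0..s, h u| ≤ C * s := by
  simpa only [Real.norm_eq_abs, sub_zero, abs_of_nonneg hs] using
    intervalIntegral.norm_integral_le_of_norm_le_const (f := h) (a := 0) (b := s) fun u _ => hC u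

lemma tendsto_intervalIntegral_sub_comp_sub (hh : Measurable h) (hC : ∀ x, |h x| ≤ C)
    (hper : asymptoticPeriods h = ⊤) (s : ℝ) :
    Tendsto (fun x => ∫ u in 0..s, (h x - h (x - u))) atTop (𝓝 0) := by
  have hlim : Tendsto (fun x => ∫ u in 0..s, (h x - h (x - u))) atTop
      (𝓝 (∫ _ in 0..s, (0 : ℝ))) := by
    refine intervalIntegral.tendsto_integral_filter_of_dominated_convergence (fun _ => C + C)
      (Eventually.of_forall fun x => ?_) (Eventually.of_forall fun x => ?_)
      intervalIntegrable_const (Eventually.of_forall fun u _ => ?_)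
    · exact (measurable_const.sub (hh.comp (by fun_prop))).aestronglyMeasurable
    · exact Eventually.of_forall fun u _ => (abs_sub _ _).trans (add_le_add (hC _) (hC _))
    · exact mem_asymptoticPeriods.1 (hper ▸ AddSubgroup.mem_top u)
  rwa [intervalIntegral.integral_zero] at hlim

lemma tendsto_integral_intervalIntegral_sub_comp_sub (hπ : ∀ᵐ s ∂π, 0 ≤ s)
    (hmean : Integrable (fun s => s) π) (hh : Measurable h) (hC : ∀ x, |h x| ≤ C)
    (hper : asymptoticPeriods h = ⊤) :
    Tendsto (fun x => ∫ s, (∫ u in 0..s, (h x - h (x - u))) ∂π) atTop (𝓝 0) := by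
  have hbound (x u : ℝ) : |h x - h (x - u)| ≤ C + C :=
    (abs_sub _ _).trans (add_le_add (hC _) (hC _))
  have hlim := tendsto_integral_filter_of_dominated_convergence (μ := π) (fun s => (C + C) * s)
    (F := fun x s => ∫ u in 0..s, (h x - h (x - u))) (l := atTop) (f := fun _ => 0)
    (Eventually.of_forall fun x => (intervalIntegral.continuous_primitive
      (intervalIntegrable_of_bounded (measurable_const.sub (hh.comp (by fun_prop))) (hbound x))
      0).aestronglyMeasurable)
    (Eventually.of_forall fun x => hπ.mono fun s hs => abs_intervalIntegral_le_mul (hbound x) hs)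
    (hmean.const_mul _)
    (Eventually.of_forall fun s => tendsto_intervalIntegral_sub_comp_sub hh hC hper s)
  rwa [integral_zero] at hlim

lemma integral_intervalIntegral_sub_comp_sub (hπ : ∀ᵐ s ∂π, 0 ≤ s)
    (hmean : Integrable (fun s => s) π) (hh : Measurable h) (hC : ∀ x, |h x| ≤ C) (x : ℝ) :
    ∫ s, (∫ u in 0..s, (h x - h (x - u))) ∂π
      = h x * ∫ s, s ∂π - ∫ s, (∫ u in 0..s, h (x - u)) ∂π := by
  have hint : ∀ a b, IntervalIntegrable (fun u => h (x - u)) volume a b :=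
    intervalIntegrable_of_bounded (hh.comp (by fun_prop)) fun u => hC (x - u)
  have hprim : Integrable (fun s => ∫ u in 0..s, h (x - u)) π :=
    (hmean.const_mul C).mono'
      (intervalIntegral.continuous_primitive hint 0).aestronglyMeasurable
      (hπ.mono fun s hs => abs_intervalIntegral_le_mul (fun u => hC (x - u)) hs)
  have hsplit (s : ℝ) :
      ∫ u in 0..s, (h x - h (x - u)) = h x * s - ∫ u in 0..s, h (x - u) := by
    rw [intervalIntegral.integral_sub intervalIntegrable_const (hint 0 s),
      intervalIntegral.integral_const, sub_zero, smul_eq_mul, mul_comm]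
  simp only [hsplit]
  rw [integral_sub (hmean.const_mul _) hprim, integral_const_mul]

variable [IsProbabilityMeasure π]

lemma integrable_prod_comp_sub (hh : Measurable h) (hC : ∀ x, |h x| ≤ C) (x : ℝ) :
    Integrable (fun p : ℝ × ℝ => h (p.1 - p.2)) ((volume.restrict (Set.uIoc 0 x)).prod π) := by
  have : IsFiniteMeasure (volume.restrict (Set.uIoc 0 x)) := ⟨by simp [Set.uIoc]⟩
  exact Integrable.of_bound (hh.comp (measurable_fst.sub measurable_snd)).aestronglyMeasurable C
    (Eventually.of_forall fun p => hC (p.1 - p.2))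

lemma intervalIntegral_stepAverage (hh : Measurable h) (hC : ∀ x, |h x| ≤ C) (x : ℝ) :
    ∫ u in 0..x, stepAverage π h u = ∫ s, (∫ u in 0..x, h (u - s)) ∂π :=
  intervalIntegral_integral_swap (integrable_prod_comp_sub hh hC x)

lemma integrable_intervalIntegral_comp_sub (hh : Measurable h) (hC : ∀ x, |h x| ≤ C) (x : ℝ) :
    Integrable (fun s => ∫ u in 0..x, h (u - s)) π := by
  simp only [intervalIntegral.intervalIntegral_eq_integral_uIoc]
  exact (integrable_prod_comp_sub hh hC x).integral_prod_right.smul (if 0 ≤ x then (1 : ℝ) else -1)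

lemma intervalIntegral_sub_intervalIntegral_comp_sub (hh : Measurable h) (hC : ∀ x, |h x| ≤ C)
    (hh0 : ∀ x < 0, h x = 0) {x s : ℝ} (hs : 0 ≤ s) :
    (∫ u in 0..x, h u) - ∫ u in 0..x, h (u - s) = ∫ u in 0..s, h (x - u) := by
  have hint := intervalIntegrable_of_bounded hh hC
  have hzero : ∫ u in -s..0, h u = 0 := by
    refine intervalIntegral.integral_zero_ae ?_
    filter_upwards [compl_mem_ae_iff.2 (measure_singleton (0 : ℝ))] with u hu0 hu
    rw [Set.uIoc_of_le (by linarith)] at hu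
    exact hh0 u (lt_of_le_of_ne hu.2 hu0)
  rw [intervalIntegral.integral_comp_sub_right h s, intervalIntegral.integral_comp_sub_left h x,
    zero_sub, sub_zero, ← intervalIntegral.integral_add_adjacent_intervals (hint (-s) 0) (hint 0 _),
    hzero, zero_add, intervalIntegral.integral_interval_sub_left (hint 0 x) (hint 0 _)]

/-- Integrating the renewal equation: the mass entering up to time `x` equals the mass that the
current steps still have to pass on. -/
lemma integral_intervalIntegral_comp_sub (hπ : ∀ᵐ s ∂π, 0 ≤ s) (hh : Measurable h)
    (hC : ∀ x, |h x| ≤ C) (hh0 : ∀ x < 0, h x = 0)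
    (hren : ∀ x, h x = f x + stepAverage π h x) (x : ℝ) :
    ∫ s, (∫ u in 0..s, h (x - u)) ∂π = ∫ u in 0..x, f u := by
  have havg : IntervalIntegrable (stepAverage π h) volume 0 x :=
    intervalIntegrable_of_bounded (measurable_stepAverage hh) (abs_stepAverage_le hC) 0 x
  calc ∫ s, (∫ u in 0..s, h (x - u)) ∂π
      = ∫ s, ((∫ u in 0..x, h u) - ∫ u in 0..x, h (u - s)) ∂π := by
        refine integral_congr_ae ?_
        filter_upwards [hπ] with s hs
        exact (intervalIntegral_sub_intervalIntegral_comp_sub hh hC hh0 hs).symm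
    _ = (∫ u in 0..x, h u) - ∫ u in 0..x, stepAverage π h u := by
        rw [integral_sub (integrable_const _) (integrable_intervalIntegral_comp_sub hh hC x),
          intervalIntegral_stepAverage hh hC, integral_const, probReal_univ, one_smul]
    _ = ∫ u in 0..x, f u := by
        rw [← intervalIntegral.integral_sub (intervalIntegrable_of_bounded hh hC 0 x) havg]
        exact intervalIntegral.integral_congr fun u _ => sub_eq_of_eq_add (hren u)

theorem tendsto_mul_mean_of_renewal (hπ : ∀ᵐ s ∂π, 0 ≤ s) (hmean : Integrable (fun s => s) π)
    (hh : Measurable h) (hC : ∀ x, |h x| ≤ C) (hh0 : ∀ x < 0, h x = 0)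
    (hf : Integrable f) (hf0 : ∀ x < 0, f x = 0)
    (hren : ∀ x, h x = f x + stepAverage π h x) (hper : asymptoticPeriods h = ⊤) :
    Tendsto (fun x => h x * ∫ s, s ∂π) atTop (𝓝 (∫ x, f x)) := by
  have hforcing : Tendsto (fun x => ∫ u in 0..x, f u) atTop (𝓝 (∫ x, f x)) := by
    rw [← setIntegral_eq_integral_of_forall_compl_eq_zero (s := Set.Ici 0)
      fun x hx => hf0 x (not_le.1 hx), integral_Ici_eq_integral_Ioi]
    exact intervalIntegral_tendsto_integral_Ioi 0 hf.integrableOn tendsto_id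
  have hdefect := tendsto_integral_intervalIntegral_sub_comp_sub hπ hmean hh hC hper
  refine (zero_add (∫ x, f x) ▸ hdefect.add hforcing).congr fun x => ?_
  rw [← integral_intervalIntegral_comp_sub hπ hh hC hh0 hren x,
    integral_intervalIntegral_sub_comp_sub hπ hmean hh hC x, sub_add_cancel]

end KeyRenewal

section Profile

variable {π : Measure ℝ} {ℓ ρ b : ℝ} {g : ℝ → ℝ}

/-- A map that commutes with the steps of `π` and lowers points by at most `b`. It is the identity
if the atoms of `π` generate a dense subgroup of `ℝ`, and rounds down to the lattice they generate
otherwise, which lets both cases of the renewal theorem share one proof. -/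
structure IsStepRounding (π : Measure ℝ) (b : ℝ) (g : ℝ → ℝ) : Prop where
  measurable : Measurable g
  le_self : ∀ x, g x ≤ x
  self_le_add : ∀ x, x ≤ g x + b
  nonneg : ∀ x, 0 ≤ x → 0 ≤ g x
  comp_sub : ∀ᵐ s ∂π, ∀ x, g (x - s) = g x - s

lemma isStepRounding_id : IsStepRounding π 0 id where
  measurable := measurable_id
  le_self _ := le_rfl
  self_le_add x := (add_zero x).ge
  nonneg _ := id
  comp_sub := Eventually.of_forall fun _ _ => rfl

lemma isStepRounding_latticeFloor (hb : 0 < b) (hπ : ∀ᵐ s ∂π, s ∈ AddSubgroup.zmultiples b) :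
    IsStepRounding π b (latticeFloor b) where
  measurable := measurable_latticeFloor b
  le_self := latticeFloor_le hb
  self_le_add x := (lt_latticeFloor_add hb x).le
  nonneg _ := latticeFloor_nonneg hb
  comp_sub := hπ.mono fun _ hs x => latticeFloor_sub_of_mem_zmultiples hb x hs

namespace IsStepRounding

lemma expDecay_eq (hg : IsStepRounding π b g) (x : ℝ) :
    expDecay ρ x = Real.exp (-ρ * (x - g x)) * expDecay ρ (g x) := by
  rcases lt_or_ge x 0 with hx | hx
  · rw [expDecay_of_neg hx, expDecay_of_neg ((hg.le_self x).trans_lt hx), mul_zero]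
  · rw [expDecay_of_nonneg hx, expDecay_of_nonneg (hg.nonneg x hx), ← Real.exp_add]
    ring_nf

lemma exp_le_one (hg : IsStepRounding π b g) (hρ : 0 ≤ ρ) (x : ℝ) :
    Real.exp (-ρ * (x - g x)) ≤ 1 :=
  Real.exp_le_one_iff.2 (by nlinarith [hg.le_self x])

lemma le_exp (hg : IsStepRounding π b g) (hρ : 0 ≤ ρ) (x : ℝ) :
    Real.exp (-ρ * b) ≤ Real.exp (-ρ * (x - g x)) :=
  Real.exp_le_exp.2 (by nlinarith [hg.self_le_add x])

lemma expDecay_le_comp (hg : IsStepRounding π b g) (hρ : 0 ≤ ρ) (x : ℝ) :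
    expDecay ρ x ≤ expDecay ρ (g x) := by
  rw [hg.expDecay_eq x]
  exact mul_le_of_le_one_left (expDecay_nonneg _) (hg.exp_le_one hρ x)

lemma expDecay_comp_le (hg : IsStepRounding π b g) (hρ : 0 ≤ ρ) (x : ℝ) :
    expDecay ρ (g x) ≤ Real.exp (ρ * b) * expDecay ρ x := by
  rw [hg.expDecay_eq x, ← mul_assoc, ← Real.exp_add]
  exact le_mul_of_one_le_left (expDecay_nonneg _)
    (Real.one_le_exp (by nlinarith [hg.self_le_add x]))

lemma integral_expDecay_comp_pos (hg : IsStepRounding π b g) (hρ : 0 < ρ) :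
    Integrable (fun x => expDecay ρ (g x)) ∧ 0 < ∫ x, expDecay ρ (g x) := by
  have hint : Integrable (expDecay ρ) := by
    rw [expDecay, integrable_indicator_iff measurableSet_Ici, integrableOn_Ici_iff_integrableOn_Ioi]
    exact exp_neg_integrableOn_Ioi 0 hρ
  have hpos : 0 < ∫ x, expDecay ρ x := by
    rw [expDecay, integral_indicator measurableSet_Ici, integral_Ici_eq_integral_Ioi,
      integral_exp_mul_Ioi (neg_lt_zero.2 hρ)]
    simpa using hρ
  have hcomp : Integrable fun x => expDecay ρ (g x) :=
    (hint.const_mul (Real.exp (ρ * b))).mono'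
      ((measurable_expDecay ρ).comp hg.measurable).aestronglyMeasurable
      (Eventually.of_forall fun x => by
        rw [Real.norm_of_nonneg (expDecay_nonneg _)]
        exact hg.expDecay_comp_le hρ.le x)
  exact ⟨hcomp, hpos.trans_le (integral_mono hint hcomp (hg.expDecay_le_comp hρ.le))⟩

lemma stepAverage_comp (hg : IsStepRounding π b g) (f : ℝ → ℝ) (x : ℝ) :
    stepAverage π (f ∘ g) x = stepAverage π f (g x) :=
  integral_congr_ae (hg.comp_sub.mono fun _ hs => congrArg f (hs x))

lemma stepAverage_convPow_comp [IsProbabilityMeasure π] (hg : IsStepRounding π b g) {f : ℝ → ℝ}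
    {C : ℝ} (hf : Measurable f) (hC : ∀ x, |f x| ≤ C) (k : ℕ) :
    stepAverage (convPow π k) (f ∘ g) = stepAverage (convPow π k) f ∘ g := by
  induction k with
  | zero => simp only [stepAverage_convPow_zero]
  | succ k ih =>
    rw [stepAverage_convPow_succ (hf.comp hg.measurable) fun x => hC (g x), ih]
    funext x
    rw [hg.stepAverage_comp, stepAverage_convPow_succ hf hC, Function.comp_apply]

lemma exp_comp_sub (hg : IsStepRounding π b g) :
    ∀ᵐ s ∂π, ∀ x, Real.exp (-ρ * (x - s - g (x - s))) = Real.exp (-ρ * (x - g x)) := by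
  filter_upwards [hg.comp_sub] with s hs x
  rw [hs, sub_sub_sub_cancel_right]

lemma measurable_exp (hg : IsStepRounding π b g) :
    Measurable fun x => Real.exp (-ρ * (x - g x)) := by
  have := hg.measurable
  fun_prop

lemma renewalTerm_eq [IsProbabilityMeasure π] (hg : IsStepRounding π b g) (hρ : 0 ≤ ρ) (m : ℕ)
    (x : ℝ) : renewalTerm π ρ m x = Real.exp (-ρ * (x - g x)) * renewalTerm π ρ m (g x) := by
  have hfactor : expDecay ρ = fun x => Real.exp (-ρ * (x - g x)) * (expDecay ρ ∘ g) x :=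
    funext hg.expDecay_eq
  rw [renewalTerm, ← Function.comp_apply (f := stepAverage _ _) (g := g),
    ← hg.stepAverage_convPow_comp (measurable_expDecay ρ) (abs_expDecay_le_one hρ)]
  conv_lhs => rw [hfactor]
  refine stepAverage_convPow_mul_left hg.measurable_exp (C' := 1) (fun x => ?_)
    (fun x => hg.exp_comp_sub.mono fun _ hs => hs x) ((measurable_expDecay ρ).comp hg.measurable)
    (fun x => abs_expDecay_le_one hρ (g x)) m x
  rw [abs_of_pos (Real.exp_pos _)]
  exact hg.exp_le_one hρ x

lemma renewalFun_eq [IsProbabilityMeasure π] (hg : IsStepRounding π b g) (hρ : 0 ≤ ρ) (x : ℝ) :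
    renewalFun π ρ x = Real.exp (-ρ * (x - g x)) * renewalFun π ρ (g x) := by
  simp only [renewalFun, ← tsum_mul_left]
  exact tsum_congr fun m => hg.renewalTerm_eq hρ m x

end IsStepRounding

section PositiveSteps

variable [IsProbabilityMeasure π] (hℓ : 0 < ℓ) (hπ : ∀ᵐ s ∂π, ℓ ≤ s)

include hℓ hπ

lemma mean_pos (hmean : Integrable (fun s => s) π) : 0 < ∫ s, s ∂π := by
  have := integral_mono_ae (integrable_const ℓ) hmean hπ
  rw [integral_const, probReal_univ, one_smul] at this
  exact hℓ.trans_le this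

lemma renewalFun_slowly_decreasing (hρ : 0 < ρ) {ε : ℝ} (hε : 0 < ε) :
    ∃ η > 0, ∀ x y, x ≤ y → y ≤ x + η → renewalFun π ρ x ≤ renewalFun π ρ y + ε := by
  set C := (1 - Real.exp (-ρ * ℓ))⁻¹
  have hcont : Tendsto (fun η => (Real.exp (ρ * η) - 1) * C) (𝓝[>] 0) (𝓝 0) := by
    have : Continuous fun η => (Real.exp (ρ * η) - 1) * C := by fun_prop
    simpa using (this.tendsto 0).mono_left nhdsWithin_le_nhds
  obtain ⟨η, hηε, hη⟩ := ((hcont.eventually_lt_const hε).and self_mem_nhdsWithin).exists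
  refine ⟨η, hη, fun x y hxy hyx => ?_⟩
  have hmono : renewalFun π ρ x ≤ Real.exp (ρ * (y - x)) * renewalFun π ρ y := by
    have := monotone_exp_mul_renewalFun hℓ hπ hρ.le hxy
    rwa [← le_div_iff₀' (Real.exp_pos _), mul_div_right_comm, ← Real.exp_sub, ← mul_sub] at this
  have hexp : Real.exp (ρ * (y - x)) ≤ Real.exp (ρ * η) :=
    Real.exp_le_exp.2 (mul_le_mul_of_nonneg_left (by linarith) hρ.le)
  have hone : 1 ≤ Real.exp (ρ * η) := Real.one_le_exp (mul_nonneg hρ.le (le_of_lt hη))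
  nlinarith [renewalFun_le hℓ hπ hρ y, renewalFun_nonneg (π := π) (ρ := ρ) y]

lemma atom_mem_asymptoticPeriods_renewalFun (hρ : 0 < ρ) {a : ℝ} (ha : π {a} ≠ 0) :
    a ∈ asymptoticPeriods (renewalFun π ρ) := by
  refine atom_mem_asymptoticPeriods measurable_renewalFun (abs_renewalFun_le hℓ hπ hρ) ?_ ha
  have hexp : Tendsto (fun x => Real.exp (-ρ * x)) atTop (𝓝 0) :=
    Real.tendsto_exp_atBot.comp (tendsto_id.const_mul_atTop_of_neg (neg_lt_zero.2 hρ))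
  refine hexp.congr' ?_
  filter_upwards [eventually_ge_atTop 0] with x hx
  rw [renewalFun_eq_add_stepAverage hℓ hπ hρ.le, add_sub_cancel_right, expDecay_of_nonneg hx]

lemma exists_isStepRounding (hatom : ∀ᵐ s ∂π, π {s} ≠ 0) (hρ : 0 < ρ) :
    ∃ b g, IsStepRounding π b g ∧ asymptoticPeriods (renewalFun π ρ ∘ g) = ⊤ := by
  set G := AddSubgroup.closure {a : ℝ | π {a} ≠ 0}
  have hle : G ≤ asymptoticPeriods (renewalFun π ρ) := (AddSubgroup.closure_le _).2
    fun a ha => atom_mem_asymptoticPeriods_renewalFun hℓ hπ hρ ha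
  have hmem : ∀ᵐ s ∂π, s ∈ G := hatom.mono fun s hs => AddSubgroup.subset_closure hs
  rcases G.dense_or_cyclic with hdense | ⟨a, ha⟩
  · exact ⟨0, id, isStepRounding_id, asymptoticPeriods_eq_top_of_dense
      (fun ε hε => renewalFun_slowly_decreasing hℓ hπ hρ hε) (hdense.mono hle)⟩
  · have hzmultiples : G = AddSubgroup.zmultiples |a| := by
      rw [ha, ← AddSubgroup.zmultiples_eq_closure]
      rcases abs_choice a with h | h <;> simp [h]
    have hpos : 0 < |a| := by
      refine abs_pos.2 fun ha0 => ?_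
      obtain ⟨s, hsG, hs⟩ := (hmem.and hπ).exists
      simp only [ha, ha0, AddSubgroup.closure_singleton_zero, AddSubgroup.mem_bot] at hsG
      linarith
    refine ⟨|a|, latticeFloor |a|, isStepRounding_latticeFloor hpos (hzmultiples ▸ hmem),
      asymptoticPeriods_comp_latticeFloor hpos (hle ?_)⟩
    exact hzmultiples ▸ AddSubgroup.mem_zmultiples |a|

lemma tendsto_renewalFun_comp (hmean : Integrable (fun s => s) π) (hρ : 0 < ρ)
    (hg : IsStepRounding π b g) (hper : asymptoticPeriods (renewalFun π ρ ∘ g) = ⊤) :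
    ∃ c > 0, Tendsto (fun x => renewalFun π ρ (g x)) atTop (𝓝 c) := by
  have hπ0 : ∀ᵐ s ∂π, 0 ≤ s := hπ.mono fun s hs => hℓ.le.trans hs
  obtain ⟨hint, hpos⟩ := hg.integral_expDecay_comp_pos hρ
  have hren (x : ℝ) : (renewalFun π ρ ∘ g) x
      = expDecay ρ (g x) + stepAverage π (renewalFun π ρ ∘ g) x := by
    rw [hg.stepAverage_comp, Function.comp_apply, ← renewalFun_eq_add_stepAverage hℓ hπ hρ.le]
  have hneg {x : ℝ} (hx : x < 0) : g x < 0 := (hg.le_self x).trans_lt hx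
  have hlim := tendsto_mul_mean_of_renewal hπ0 hmean (measurable_renewalFun.comp hg.measurable)
    (fun x => abs_renewalFun_le hℓ hπ hρ (g x))
    (fun x hx => renewalFun_of_neg hℓ hπ hρ.le (hneg hx))
    hint (fun x hx => expDecay_of_neg (hneg hx)) hren hper
  have hM := mean_pos hℓ hπ hmean
  refine ⟨_, div_pos hpos hM, (hlim.div_const _).congr fun x => ?_⟩
  rw [mul_div_cancel_right₀ _ hM.ne', Function.comp_apply]

/-- A positive function, bounded away from `0` and `∞` and invariant under the steps of `π`, to
which the renewal function is asymptotic. It is constant unless `π` lives on a lattice. -/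
structure IsRenewalProfile (π : Measure ℝ) (ρ : ℝ) (φ : ℝ → ℝ) : Prop where
  measurable : Measurable φ
  exists_lower : ∃ c > 0, ∀ x, c ≤ φ x
  exists_upper : ∃ C, ∀ x, φ x ≤ C
  comp_sub : ∀ x, ∀ᵐ s ∂π, φ (x - s) = φ x
  tendsto_sub : Tendsto (fun x => renewalFun π ρ x - φ x) atTop (𝓝 0)

theorem exists_isRenewalProfile (hatom : ∀ᵐ s ∂π, π {s} ≠ 0) (hmean : Integrable (fun s => s) π)
    (hρ : 0 < ρ) : ∃ φ, IsRenewalProfile π ρ φ := by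
  obtain ⟨b, g, hg, hper⟩ := exists_isStepRounding hℓ hπ hatom hρ
  obtain ⟨c, hc, hlim⟩ := tendsto_renewalFun_comp hℓ hπ hmean hρ hg hper
  refine ⟨fun x => Real.exp (-ρ * (x - g x)) * c, hg.measurable_exp.mul_const c,
    ⟨Real.exp (-ρ * b) * c, by positivity, fun x => ?_⟩, ⟨c, fun x => ?_⟩,
    fun x => hg.exp_comp_sub.mono fun _ hs => congrArg (· * c) (hs x), ?_⟩
  · exact mul_le_mul_of_nonneg_right (hg.le_exp hρ.le x) hc.le
  · exact mul_le_of_le_one_left hc.le (hg.exp_le_one hρ.le x)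
  · refine squeeze_zero_norm (fun x => ?_) (by simpa using (hlim.sub_const c).abs)
    rw [hg.renewalFun_eq hρ.le, ← mul_sub, norm_mul, Real.norm_of_nonneg (Real.exp_pos _).le]
    exact mul_le_of_le_one_left (abs_nonneg _) (hg.exp_le_one hρ.le x)

end PositiveSteps

end Profile

section CentralLimit

variable {π : Measure ℝ} [IsProbabilityMeasure π]

lemma convPow_eq_map_sum (k : ℕ) :
    convPow π k = (Measure.infinitePi fun _ : ℕ => π).map fun ω => ∑ i ∈ Finset.range k, ω i := by
  induction k with
  | zero => simp [convPow]
  | succ k ih =>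
    have hindep : IndepFun (∑ i ∈ Finset.range k, fun ω : ℕ → ℝ => ω i) (fun ω => ω k)
        (Measure.infinitePi fun _ : ℕ => π) :=
      (iIndepFun_infinitePi (P := fun _ : ℕ => π) (X := fun _ ω => ω)
        fun _ => measurable_id).indepFun_sum_range_succ measurable_pi_apply k
    have hsum := hindep.map_add_eq_map_conv_map (by fun_prop) (measurable_pi_apply k)
    have heval := (measurePreserving_eval_infinitePi (fun _ : ℕ => π) k).map_eq
    simp only [Finset.sum_fn, heval, ← ih] at hsum
    rw [convPow, Measure.conv_comm, ← hsum]
    congr 1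
    funext ω
    simp [Finset.sum_range_succ]

lemma tendstoInDistribution_sum (h2 : MemLp id 2 π) :
    TendstoInDistribution
      (fun (k : ℕ) (ω : ℕ → ℝ) => (√k)⁻¹ * (∑ i ∈ Finset.range k, ω i - k * ∫ s, s ∂π)) atTop id
      (fun _ => Measure.infinitePi fun _ : ℕ => π) (gaussianReal 0 Var[id; π].toNNReal) := by
  have hident (i : ℕ) :
      IdentDistrib (fun ω : ℕ → ℝ => ω i) id (Measure.infinitePi fun _ : ℕ => π) π :=
    ⟨(measurable_pi_apply i).aemeasurable, by fun_prop, by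
      rw [Measure.map_id]
      exact (measurePreserving_eval_infinitePi (fun _ : ℕ => π) i).map_eq⟩
  have hmean : ∫ ω : ℕ → ℝ, ω 0 ∂(Measure.infinitePi fun _ : ℕ => π) = ∫ s, s ∂π :=
    (hident 0).integral_eq
  rw [← (hident 0).variance_eq, ← hmean]
  exact tendstoInDistribution_inv_sqrt_mul_sum_sub ⟨by fun_prop, Measure.map_id⟩
    ((hident 0).memLp_iff.2 h2)
    (iIndepFun_infinitePi (P := fun _ : ℕ => π) (X := fun _ ω => ω) fun _ => measurable_id)
    fun i => (hident i).trans (hident 0).symm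

variable {ι : Type*} {L : Filter ι} {k : ι → ℕ} {x : ι → ℝ}

lemma tendstoInMeasure_const {Ω E : Type*} [MeasurableSpace Ω] [PseudoEMetricSpace E]
    {P : Measure Ω} {ι : Type*} {L : Filter ι} {c : ι → E} {d : E} (hc : Tendsto c L (𝓝 d)) :
    TendstoInMeasure P (fun i _ => c i) L fun _ => d := fun ε hε => by
  refine tendsto_const_nhds.congr' ?_
  filter_upwards [EMetric.tendsto_nhds.1 hc ε hε] with i hi
  simp [hi.not_ge]

lemma tendsto_convPow_real_Iic [L.IsCountablyGenerated] (h2 : MemLp id 2 π)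
    (hV : Var[id; π] ≠ 0) {ζ : ℝ} (hk : Tendsto k L atTop)
    (hx : Tendsto (fun i => (x i - k i * ∫ s, s ∂π) / √(k i)) L (𝓝 ζ)) :
    Tendsto (fun i => (convPow π (k i)).real (Set.Iic (x i))) L
      (𝓝 ((gaussianReal 0 Var[id; π].toNNReal).real (Set.Iic ζ))) := by
  set z : ι → ℝ := fun i => (x i - k i * ∫ s, s ∂π) / √(k i) with hz
  have hv : Var[id; π].toNNReal ≠ 0 := by
    simpa using (variance_nonneg (id : ℝ → ℝ) π).lt_of_ne' hV
  have := nullSingletonClass_gaussianReal (μ := 0) hv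
  have hdist := tendstoInDistribution_sum h2
  have hmoving : TendstoInDistribution (fun i (ω : ℕ → ℝ) =>
      (√(k i))⁻¹ * (∑ j ∈ Finset.range (k i), ω j - k i * ∫ s, s ∂π)) L id
      (fun _ => Measure.infinitePi fun _ : ℕ => π) (gaussianReal 0 Var[id; π].toNNReal) :=
    ⟨fun i => hdist.forall_aemeasurable (k i), hdist.aemeasurable_limit, hdist.tendsto.comp hk⟩
  have hshift := hmoving.add_of_tendstoInMeasure_const (Y := fun i _ => ζ - z i) (c := 0)
    (tendstoInMeasure_const (by simpa using hx.const_sub ζ)) fun i => by fun_prop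
  have hlim := ProbabilityMeasure.tendsto_measure_of_null_frontier_of_tendsto' hshift.tendsto
    (E := Set.Iic ζ) (by simp)
  simp only [ProbabilityMeasure.coe_mk, id, add_zero] at hlim
  rw [Measure.map_id'] at hlim
  refine ((ENNReal.tendsto_toReal (measure_ne_top _ _)).comp hlim).congr' ?_
  filter_upwards [hk.eventually_gt_atTop 0] with i hi
  have hsqrt : 0 < √(k i) := by simpa using hi
  rw [Function.comp_apply, convPow_eq_map_sum, Measure.real,
    Measure.map_apply (by fun_prop) measurableSet_Iic,
    Measure.map_apply (by fun_prop) measurableSet_Iic]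
  congr 2
  ext ω
  simp only [Set.mem_preimage, Pi.add_apply, Set.mem_Iic, hz]
  rw [← le_sub_iff_add_le, sub_sub_cancel, inv_mul_eq_div, div_le_div_iff_of_pos_right hsqrt,
    sub_le_sub_iff_right]

lemma tendsto_sub_natCast_mul_div_sqrt {M z : ℝ} (hM : 0 < M) (hx : Tendsto x L atTop)
    (hk : Tendsto (fun i => (k i - x i / M) / √(x i)) L (𝓝 z)) (a : ℝ) :
    Tendsto k L atTop ∧
      Tendsto (fun i => (x i - a - k i * M) / √(k i)) L (𝓝 (-(z * (M * √M)))) := by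
  have hs : Tendsto (fun i => √(x i)) L atTop := Real.tendsto_sqrt_atTop.comp hx
  have hratio : Tendsto (fun i => (k i : ℝ) / x i) L (𝓝 (1 / M)) := by
    have := (hk.mul hs.inv_tendsto_atTop).add_const (1 / M)
    rw [mul_zero, zero_add] at this
    refine this.congr' ?_
    filter_upwards [hx.eventually_gt_atTop 0] with i hi
    rw [Pi.inv_apply, ← div_eq_mul_inv, div_div, Real.mul_self_sqrt hi.le]
    field_simp
    ring
  have hkR : Tendsto (fun i => (k i : ℝ)) L atTop := by
    refine (hratio.pos_mul_atTop (by positivity) hx).congr' ?_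
    filter_upwards [hx.eventually_gt_atTop 0] with i hi using div_mul_cancel₀ _ hi.ne'
  refine ⟨tendsto_natCast_atTop_iff.1 hkR, ?_⟩
  have hsqrt : Tendsto (fun i => √(x i / k i)) L (𝓝 √M) := by
    simpa using (hratio.inv₀ (by positivity)).sqrt
  have hconst : Tendsto (fun i => a / √(k i)) L (𝓝 0) :=
    (Real.tendsto_sqrt_atTop.comp hkR).const_div_atTop a
  have hlim := ((hk.mul hsqrt).mul_const (-M)).sub hconst
  rw [sub_zero, mul_neg, mul_assoc, mul_comm √M] at hlim
  refine hlim.congr' ?_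
  filter_upwards [hx.eventually_gt_atTop 0, hkR.eventually_gt_atTop 0] with i hi hki
  have := Real.sqrt_pos.2 hi
  have := Real.sqrt_pos.2 hki
  rw [Real.sqrt_div hi.le]
  field_simp
  ring

lemma gaussianReal_real_Iic_neg_mul {V c z : ℝ} (hc : 0 < c) :
    (gaussianReal 0 V.toNNReal).real (Set.Iic (-(z * c)))
      = (gaussianReal 0 (V / c ^ 2).toNNReal).real (Set.Ici z) := by
  have hmap := gaussianReal_map_const_mul (μ := 0) (v := V.toNNReal) (-c⁻¹)
  have hvar : NNReal.mk ((-c⁻¹) ^ 2) (sq_nonneg _) * V.toNNReal = (V / c ^ 2).toNNReal := by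
    rw [div_eq_inv_mul, Real.toNNReal_mul (by positivity)]
    congr 1
    rw [← Real.toNNReal_of_nonneg (sq_nonneg _), neg_sq, inv_pow]
  rw [mul_zero, hvar] at hmap
  rw [← hmap, map_measureReal_apply (by fun_prop) measurableSet_Ici]
  congr 1
  ext y
  simp only [Set.mem_Iic, Set.mem_preimage, Set.mem_Ici]
  rw [neg_mul, inv_mul_eq_div, le_neg, ← neg_div, le_div_iff₀ hc]

end CentralLimit

section TailRatio

variable {π : Measure ℝ} {ℓ ρ : ℝ} {φ : ℝ → ℝ}

lemma stepAverage_indicator_Ici (a x : ℝ) :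
    stepAverage π ((Set.Ici a).indicator 1) x = π.real (Set.Iic (x - a)) := by
  have : (fun s => (Set.Ici a).indicator (1 : ℝ → ℝ) (x - s)) = (Set.Iic (x - a)).indicator 1 := by
    funext s
    simp only [Set.indicator_apply, Set.mem_Ici, Set.mem_Iic, le_sub_comm,
      Pi.one_apply]
  rw [stepAverage, this, integral_indicator_one measurableSet_Iic]

lemma stepAverage_indicator_Ici_zero (x : ℝ) :
    stepAverage π ((Set.Ici 0).indicator 1) x = π.real (Set.Iic x) := by
  rw [stepAverage_indicator_Ici, sub_zero]

lemma measurable_indicator_Ici (a : ℝ) : Measurable ((Set.Ici a).indicator (1 : ℝ → ℝ)) :=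
  measurable_one.indicator measurableSet_Ici

lemma abs_indicator_Ici_le_one (a x : ℝ) : |(Set.Ici a).indicator (1 : ℝ → ℝ) x| ≤ 1 := by
  by_cases hx : x ∈ Set.Ici a <;> simp [hx]

lemma abs_stepAverage_le_stepAverage {f g : ℝ → ℝ} {x : ℝ}
    (hg : Integrable (fun s => g (x - s)) π) (hfg : ∀ y, |f y| ≤ g y) :
    |stepAverage π f x| ≤ stepAverage π g x :=
  norm_integral_le_of_norm_le (f := fun s => f (x - s)) hg
    (Eventually.of_forall fun s => hfg (x - s))

lemma IsRenewalProfile.tendsto_div (hφ : IsRenewalProfile π ρ φ) :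
    Tendsto (fun x => renewalFun π ρ x / φ x) atTop (𝓝 1) := by
  obtain ⟨c, hc, hcφ⟩ := hφ.exists_lower
  rw [tendsto_iff_norm_sub_tendsto_zero]
  refine squeeze_zero (fun _ => norm_nonneg _) (fun x => ?_)
    (by simpa using hφ.tendsto_sub.abs.div_const c)
  rw [div_sub_one (hc.trans_le (hcφ x)).ne', norm_div, Real.norm_of_nonneg (hc.le.trans (hcφ x))]
  exact div_le_div_of_nonneg_left (norm_nonneg _) hc (hcφ x)

variable [IsProbabilityMeasure π]

lemma integrable_indicator_Ici_comp_sub (a x : ℝ) :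
    Integrable (fun s => (Set.Ici a).indicator (1 : ℝ → ℝ) (x - s)) π :=
  integrable_comp_sub (measurable_indicator_Ici a) (abs_indicator_Ici_le_one a) x

lemma integrable_indicator_Ici_gap (ε K a x : ℝ) : Integrable (fun s =>
    ε + K * ((Set.Ici 0).indicator 1 (x - s) - (Set.Ici a).indicator 1 (x - s))) π :=
  (integrable_const ε).add (((integrable_indicator_Ici_comp_sub 0 x).sub
    (integrable_indicator_Ici_comp_sub a x)).const_mul K)

lemma stepAverage_indicator_Ici_gap (ε K a x : ℝ) :
    stepAverage π (fun y => ε + K * ((Set.Ici 0).indicator 1 y - (Set.Ici a).indicator 1 y)) x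
      = ε + K * (π.real (Set.Iic x) - π.real (Set.Iic (x - a))) := by
  have hdiff : Integrable (fun s => (Set.Ici 0).indicator (1 : ℝ → ℝ) (x - s)
      - (Set.Ici a).indicator 1 (x - s)) π :=
    (integrable_indicator_Ici_comp_sub 0 x).sub (integrable_indicator_Ici_comp_sub a x)
  rw [stepAverage, integral_add (integrable_const ε) (hdiff.const_mul K), integral_const_mul,
    integral_sub (integrable_indicator_Ici_comp_sub 0 x) (integrable_indicator_Ici_comp_sub a x),
    integral_const, probReal_univ, one_smul, ← stepAverage_indicator_Ici a,
    ← stepAverage_indicator_Ici_zero]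
  rfl

namespace IsRenewalProfile

lemma abs_sub_mul_indicator_le (hφ : IsRenewalProfile π ρ φ) (hℓ : 0 < ℓ)
    (hπ : ∀ᵐ s ∂π, ℓ ≤ s) (hρ : 0 < ρ) :
    ∃ K, ∀ ε > 0, ∃ a, ∀ x, |renewalFun π ρ x - φ x * (Set.Ici 0).indicator 1 x|
      ≤ ε + K * ((Set.Ici 0).indicator 1 x - (Set.Ici a).indicator 1 x) := by
  obtain ⟨c, hc, hcφ⟩ := hφ.exists_lower
  obtain ⟨C, hφC⟩ := hφ.exists_upper
  refine ⟨(1 - Real.exp (-ρ * ℓ))⁻¹ + C, fun ε hε => ?_⟩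
  obtain ⟨a, ha⟩ := ((tendsto_zero_iff_abs_tendsto_zero _).1 hφ.tendsto_sub
    |>.eventually_le_const hε |>.and (eventually_ge_atTop 0)).exists_forall_of_atTop
  have ha0 := (ha a le_rfl).2
  refine ⟨a, fun x => ?_⟩
  rcases lt_or_ge x 0 with hx | hx
  · simp [renewalFun_of_neg hℓ hπ hρ.le hx, hx.not_ge, (hx.trans_le ha0).not_ge, hε.le]
  rcases lt_or_ge x a with hxa | hxa
  · have hdiff : |renewalFun π ρ x - φ x| ≤ (1 - Real.exp (-ρ * ℓ))⁻¹ + C :=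
      (abs_sub _ _).trans (add_le_add (abs_renewalFun_le hℓ hπ hρ x)
        ((abs_of_pos (hc.trans_le (hcφ x))).trans_le (hφC x)))
    simpa [hx, hxa.not_ge] using hdiff.trans (le_add_of_nonneg_left hε.le)
  · simpa [hx, hxa] using (ha x hxa).1

lemma abs_stepAverage_convPow_sub_le (hφ : IsRenewalProfile π ρ φ) (hℓ : 0 < ℓ)
    (hπ : ∀ᵐ s ∂π, ℓ ≤ s) (hρ : 0 < ρ) :
    ∃ K, ∀ ε > 0, ∃ a, ∀ k x, |stepAverage (convPow π k) (renewalFun π ρ) x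
        - φ x * (convPow π k).real (Set.Iic x)|
      ≤ ε + K * ((convPow π k).real (Set.Iic x) - (convPow π k).real (Set.Iic (x - a))) := by
  obtain ⟨K, hK⟩ := hφ.abs_sub_mul_indicator_le hℓ hπ hρ
  obtain ⟨c, hc, hcφ⟩ := hφ.exists_lower
  obtain ⟨C, hφC⟩ := hφ.exists_upper
  have hφabs (x : ℝ) : |φ x| ≤ C := (abs_of_pos (hc.trans_le (hcφ x))).trans_le (hφC x)
  refine ⟨K, fun ε hε => (hK ε hε).imp fun a ha k x => ?_⟩
  have hφind (y : ℝ) : |φ y * (Set.Ici 0).indicator 1 y| ≤ C * 1 := by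
    rw [abs_mul]
    exact mul_le_mul (hφabs y) (abs_indicator_Ici_le_one 0 y) (abs_nonneg _)
      ((abs_nonneg _).trans (hφabs y))
  have hφmeas : Measurable fun y => φ y * (Set.Ici 0).indicator 1 y :=
    hφ.measurable.mul (measurable_indicator_Ici 0)
  rw [← stepAverage_indicator_Ici_gap, ← stepAverage_indicator_Ici_zero,
    ← stepAverage_convPow_mul_left hφ.measurable hφabs hφ.comp_sub (measurable_indicator_Ici 0)
      (abs_indicator_Ici_le_one 0),
    ← stepAverage_sub measurable_renewalFun (abs_renewalFun_le hℓ hπ hρ) hφmeas hφind]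
  exact abs_stepAverage_le_stepAverage (integrable_indicator_Ici_gap ..) ha

lemma tendsto_stepAverage_convPow_div (hφ : IsRenewalProfile π ρ φ) (hℓ : 0 < ℓ)
    (hπ : ∀ᵐ s ∂π, ℓ ≤ s) (hρ : 0 < ρ) {ι : Type*} {L : Filter ι} {k : ι → ℕ} {x : ι → ℝ} {p : ℝ}
    (hx : Tendsto x L atTop)
    (hp : ∀ a, Tendsto (fun i => (convPow π (k i)).real (Set.Iic (x i - a))) L (𝓝 p)) :
    Tendsto (fun i => stepAverage (convPow π (k i)) (renewalFun π ρ) (x i) / renewalFun π ρ (x i))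
      L (𝓝 p) := by
  obtain ⟨c, hc, hcφ⟩ := hφ.exists_lower
  obtain ⟨K, hK⟩ := hφ.abs_stepAverage_convPow_sub_le hℓ hπ hρ
  have hp0 : Tendsto (fun i => (convPow π (k i)).real (Set.Iic (x i))) L (𝓝 p) := by
    simpa using hp 0
  have hnum : Tendsto (fun i => stepAverage (convPow π (k i)) (renewalFun π ρ) (x i)
      - φ (x i) * (convPow π (k i)).real (Set.Iic (x i))) L (𝓝 0) := by
    refine Metric.tendsto_nhds.2 fun ε hε => ?_
    obtain ⟨a, ha⟩ := hK (ε / 2) (half_pos hε)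
    have hgap : Tendsto (fun i => K * ((convPow π (k i)).real (Set.Iic (x i))
        - (convPow π (k i)).real (Set.Iic (x i - a)))) L (𝓝 0) := by
      simpa using (hp0.sub (hp a)).const_mul K
    filter_upwards [hgap.eventually_lt_const (half_pos hε)] with i hi
    rw [dist_zero_right, Real.norm_eq_abs]
    linarith [ha (k i) (x i)]
  have hdiff : Tendsto (fun i => stepAverage (convPow π (k i)) (renewalFun π ρ) (x i) / φ (x i)
      - (convPow π (k i)).real (Set.Iic (x i))) L (𝓝 0) := by
    refine squeeze_zero_norm (fun i => ?_) (by simpa using hnum.abs.div_const c)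
    have hφi := hc.trans_le (hcφ (x i))
    rw [div_sub' hφi.ne', norm_div, Real.norm_of_nonneg hφi.le]
    exact div_le_div_of_nonneg_left (norm_nonneg _) hc (hcφ (x i))
  have hlim := (hdiff.add hp0).div (hφ.tendsto_div.comp hx) one_ne_zero
  rw [zero_add, div_one] at hlim
  refine hlim.congr fun i => ?_
  simp only [Pi.div_apply, Function.comp_apply, sub_add_cancel]
  rw [div_div_div_cancel_right₀ (hc.trans_le (hcφ (x i))).ne']

end IsRenewalProfile

theorem tendsto_tsum_renewalTerm_div (hℓ : 0 < ℓ) (hπ : ∀ᵐ s ∂π, ℓ ≤ s)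
    (hatom : ∀ᵐ s ∂π, π {s} ≠ 0) (h2 : MemLp id 2 π) (hV : Var[id; π] ≠ 0) (hρ : 0 < ρ)
    {ι : Type*} {L : Filter ι} [L.IsCountablyGenerated] {k : ι → ℕ} {x : ι → ℝ} {z : ℝ}
    (hx : Tendsto x L atTop)
    (hk : Tendsto (fun i => (k i - x i / ∫ s, s ∂π) / √(x i)) L (𝓝 z)) :
    Tendsto (fun i => (∑' m, renewalTerm π ρ (m + k i) (x i)) / renewalFun π ρ (x i)) L
      (𝓝 ((gaussianReal 0 (Var[id; π] / (∫ s, s ∂π) ^ 3).toNNReal).real (Set.Ici z))) := by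
  have hmean : Integrable (fun s => s) π := h2.integrable (by norm_num)
  have hM := mean_pos hℓ hπ hmean
  obtain ⟨φ, hφ⟩ := exists_isRenewalProfile hℓ hπ hatom hmean hρ
  have hscale := tendsto_sub_natCast_mul_div_sqrt hM hx hk
  have hcube : (∫ s, s ∂π) ^ 3 = ((∫ s, s ∂π) * √(∫ s, s ∂π)) ^ 2 := by
    rw [mul_pow, Real.sq_sqrt hM.le]
    ring
  rw [hcube, ← gaussianReal_real_Iic_neg_mul (by positivity)]
  simp only [← stepAverage_convPow_renewalFun hℓ hπ hρ.le]
  exact hφ.tendsto_stepAverage_convPow_div hℓ hπ hρ hx fun a =>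
    tendsto_convPow_real_Iic h2 hV (hscale a).1 (hscale a).2

end TailRatio

section ExponentialMoments

lemma cgf_sub_mul_mean_isBigO {Ω : Type*} [MeasurableSpace Ω] {P : Measure Ω}
    [IsProbabilityMeasure P] {X : Ω → ℝ} (h : 0 ∈ interior (integrableExpSet X P)) :
    (fun t => cgf X P t - t * P[X]) =O[𝓝 0] fun t => t ^ 2 := by
  obtain ⟨p, hp⟩ := analyticAt_cgf h
  have hslope := hp.has_fpower_series_dslope_fslope.analyticAt.differentiableAt.isBigO_sub
  simp only [dslope_same, deriv_cgf_zero h, probReal_univ, div_one, sub_zero] at hslope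
  refine ((isBigO_refl (fun t : ℝ => t) _).mul hslope).congr (fun t => ?_) fun t => (sq t).symm
  have := sub_smul_dslope (cgf X P) 0 t
  rw [sub_zero, cgf_zero, sub_zero, smul_eq_mul] at this
  rw [mul_sub, this]

variable {π : Measure ℝ} [IsProbabilityMeasure π] {ℓ ρ θ : ℝ}

/-- The Esscher transform. -/
lemma renewalTerm_tilted (hθ : Integrable (fun s => Real.exp (θ * s)) π) (hρ : 0 ≤ ρ)
    (hθρ : θ ≤ ρ) (m : ℕ) (x : ℝ) :
    renewalTerm (π.tilted (θ * ·)) (ρ - θ) m x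
      = (mgf id π θ)⁻¹ ^ m * Real.exp (θ * x) * renewalTerm π ρ m x := by
  have := isProbabilityMeasure_tilted hθ
  induction m generalizing x with
  | zero =>
    rw [renewalTerm_zero, renewalTerm_zero, pow_zero, one_mul]
    rcases lt_or_ge x 0 with hx | hx
    · rw [expDecay_of_neg hx, expDecay_of_neg hx, mul_zero]
    · rw [expDecay_of_nonneg hx, expDecay_of_nonneg hx, ← Real.exp_add]
      ring_nf
  | succ m ih =>
    rw [renewalTerm_succ (sub_nonneg.2 hθρ), renewalTerm_succ hρ, stepAverage, stepAverage,
      ← integral_const_mul]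
    refine (integral_tilted_mul_eq_mgf (X := id) _).trans
      (integral_congr_ae (ae_of_all _ fun s => ?_))
    have hexp : Real.exp (θ * s) * Real.exp (θ * (x - s)) = Real.exp (θ * x) := by
      rw [← Real.exp_add]
      ring_nf
    simp only [ih, smul_eq_mul, id, ← hexp]
    ring

section PositiveSteps

variable (hℓ : 0 < ℓ) (hπ : ∀ᵐ s ∂π, ℓ ≤ s)

include hℓ hπ

lemma summable_renewalTerm_tilted (hθ : Integrable (fun s => Real.exp (θ * s)) π) (hρ : 0 ≤ ρ)
    (hθρ : θ ≤ ρ) (x : ℝ) :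
    Summable fun m => (mgf id π θ)⁻¹ ^ m * Real.exp (θ * x) * renewalTerm π ρ m x := by
  have := isProbabilityMeasure_tilted hθ
  have hπθ : ∀ᵐ s ∂π.tilted (θ * ·), ℓ ≤ s := (tilted_absolutelyContinuous π _).ae_le hπ
  simpa only [renewalTerm_tilted hθ hρ hθρ] using
    summable_renewalTerm hℓ hπθ (sub_nonneg.2 hθρ) x

lemma tsum_renewalTerm_tilted_le (hθ : Integrable (fun s => Real.exp (θ * s)) π) (hρ : 0 ≤ ρ)
    (hθρ : θ < ρ) (x : ℝ) :
    ∑' m, (mgf id π θ)⁻¹ ^ m * Real.exp (θ * x) * renewalTerm π ρ m x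
      ≤ (1 - Real.exp (-(ρ - θ) * ℓ))⁻¹ := by
  have := isProbabilityMeasure_tilted hθ
  have hπθ : ∀ᵐ s ∂π.tilted (θ * ·), ℓ ≤ s := (tilted_absolutelyContinuous π _).ae_le hπ
  simpa only [renewalFun, renewalTerm_tilted hθ hρ hθρ.le] using
    renewalFun_le hℓ hπθ (sub_pos.2 hθρ) x

/-- On the support `m ℓ ≤ x` of the `m`-step term, the quadratic error `m C θ²` of the cumulant
generating function is at most `C θ² x / ℓ`. -/
lemma renewalTerm_mul_exp_le (hθ : Integrable (fun s => Real.exp (θ * s)) π) (hρ : 0 ≤ ρ)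
    {M C : ℝ} (hC : 0 ≤ C) (hcgf : cgf id π θ ≤ θ * M + C * θ ^ 2) (m : ℕ) (x : ℝ) :
    renewalTerm π ρ m x * Real.exp (θ * (x - m * M)) ≤ Real.exp (C * (θ ^ 2 * x) / ℓ)
      * ((mgf id π θ)⁻¹ ^ m * Real.exp (θ * x) * renewalTerm π ρ m x) := by
  rcases lt_or_ge x (m * ℓ) with hm | hm
  · simp [renewalTerm_eq_zero hπ hρ hm]
  rw [← mul_assoc, mul_comm]
  refine mul_le_mul_of_nonneg_right ?_ (renewalTerm_nonneg m x)
  have hmgf : (mgf id π θ)⁻¹ ^ m = Real.exp (-(m * cgf id π θ)) := by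
    rw [← exp_cgf (X := id) hθ, ← Real.exp_neg, ← Real.exp_nat_mul, mul_neg]
  have herror : m * (C * θ ^ 2) ≤ C * (θ ^ 2 * x) / ℓ := by
    rw [le_div_iff₀ hℓ]
    linarith [mul_le_mul_of_nonneg_left hm (mul_nonneg hC (sq_nonneg θ))]
  rw [hmgf, ← Real.exp_add, ← Real.exp_add, Real.exp_le_exp]
  linarith [mul_le_mul_of_nonneg_left hcgf m.cast_nonneg (α := ℝ)]

lemma exists_eventually_tsum_renewalTerm_mul_exp_le
    (hexp : 0 ∈ interior (integrableExpSet id π)) (hρ : 0 < ρ) {θ : ℝ → ℝ}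
    (hθ : Tendsto θ atTop (𝓝 0)) (hθx : ∀ᶠ x in atTop, θ x ^ 2 * x = 1) :
    ∃ C, ∀ᶠ x in atTop,
      ∑' m : ℕ, renewalTerm π ρ m x * Real.exp (θ x * (x - m * ∫ s, s ∂π)) ≤ C := by
  obtain ⟨C, hC, hcgf⟩ := (cgf_sub_mul_mean_isBigO hexp).exists_nonneg
  have hint : ∀ᶠ t in 𝓝 0, Integrable (fun s => Real.exp (t * s)) π :=
    mem_interior_iff_mem_nhds.1 hexp
  have hbound : Tendsto (fun x => Real.exp (C * 1 / ℓ) * (1 - Real.exp (-(ρ - θ x) * ℓ))⁻¹) atTop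
      (𝓝 (Real.exp (C * 1 / ℓ) * (1 - Real.exp (-(ρ - 0) * ℓ))⁻¹)) := by
    have hpos : 1 - Real.exp (-(ρ - 0) * ℓ) ≠ 0 :=
      (sub_pos.2 (Real.exp_lt_one_iff.2 (by nlinarith))).ne'
    refine (Tendsto.inv₀ ?_ hpos).const_mul _
    exact tendsto_const_nhds.sub
      ((Real.continuous_exp.tendsto _).comp ((hθ.const_sub ρ).neg.mul_const ℓ))
  refine ⟨Real.exp (C * 1 / ℓ) * (1 - Real.exp (-(ρ - 0) * ℓ))⁻¹ + 1, ?_⟩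
  filter_upwards [hθ.eventually hcgf.bound, hθ.eventually hint, hθ.eventually_lt_const hρ, hθx,
    hbound.eventually_le_const (lt_add_one _)] with x hcgfx hintx hθρ hθsq hle
  rw [Real.norm_of_nonneg (sq_nonneg _)] at hcgfx
  have hcgfx : cgf id π (θ x) ≤ θ x * (∫ s, s ∂π) + C * θ x ^ 2 :=
    sub_le_iff_le_add'.1 ((le_abs_self _).trans hcgfx)
  refine le_trans ?_ hle
  refine le_trans ?_ (mul_le_mul_of_nonneg_left
    (tsum_renewalTerm_tilted_le hℓ hπ hintx hρ.le hθρ x) (Real.exp_pos _).le)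
  rw [← tsum_mul_left, ← hθsq]
  exact (summable_renewalTerm_mul hℓ hπ hρ.le x _).tsum_le_tsum
    (renewalTerm_mul_exp_le hℓ hπ hintx hρ.le hC hcgfx · x)
    ((summable_renewalTerm_tilted hℓ hπ hintx hρ.le hθρ.le x).mul_left _)

theorem exists_eventually_tsum_renewalTerm_mul_exp_abs_le
    (hexp : 0 ∈ interior (integrableExpSet id π)) (hρ : 0 < ρ) :
    ∃ C, ∀ᶠ x in atTop,
      ∑' m : ℕ, renewalTerm π ρ m x * Real.exp |(√x)⁻¹ * (x - m * ∫ s, s ∂π)| ≤ C := by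
  have hsqrt : Tendsto (fun x => (√x)⁻¹) atTop (𝓝 0) :=
    Real.tendsto_sqrt_atTop.inv_tendsto_atTop
  have hsq : ∀ᶠ x in atTop, (√x)⁻¹ ^ 2 * x = 1 := by
    filter_upwards [eventually_gt_atTop 0] with x hx
    rw [inv_pow, Real.sq_sqrt hx.le, inv_mul_cancel₀ hx.ne']
  obtain ⟨C₁, h₁⟩ := exists_eventually_tsum_renewalTerm_mul_exp_le hℓ hπ hexp hρ hsqrt hsq
  obtain ⟨C₂, h₂⟩ := exists_eventually_tsum_renewalTerm_mul_exp_le hℓ hπ hexp hρ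
    (by simpa using hsqrt.neg) (hsq.mono fun x hx => (congrArg (· * x) (neg_sq _)).trans hx)
  refine ⟨C₁ + C₂, ?_⟩
  filter_upwards [h₁, h₂] with x hx₁ hx₂
  refine le_trans ?_ (add_le_add hx₁ hx₂)
  have hsum (g : ℕ → ℝ) := summable_renewalTerm_mul hℓ hπ hρ.le x g
  rw [← (hsum _).tsum_add (hsum _)]
  refine (hsum _).tsum_le_tsum (fun m => ?_) ((hsum _).add (hsum _))
  rw [← mul_add, neg_mul]
  exact mul_le_mul_of_nonneg_left (Real.exp_abs_le _) (renewalTerm_nonneg m x)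

end PositiveSteps

end ExponentialMoments

section AbsoluteMoments

lemma measureReal_lt_abs {Ω : Type*} [MeasurableSpace Ω] {P : Measure Ω} [IsProbabilityMeasure P]
    {f : Ω → ℝ} (hf : Measurable f) {t : ℝ} (ht : 0 < t) :
    P.real {ω | t < |f ω|} = P.real {ω | t < f ω} + (1 - P.real {ω | -t ≤ f ω}) := by
  have hsplit : {ω | t < |f ω|} = {ω | t < f ω} ∪ {ω | -t ≤ f ω}ᶜ := by
    ext ω
    simp only [Set.mem_ofPred_eq, Set.mem_union, Set.mem_compl_iff, not_le, lt_abs, lt_neg]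
  have hdisj : Disjoint {ω | t < f ω} {ω | -t ≤ f ω}ᶜ :=
    Set.disjoint_left.2 fun ω (hω : t < f ω) hω' => hω' (show -t ≤ f ω by linarith)
  have hmeas : MeasurableSet {ω | -t ≤ f ω} := measurableSet_le measurable_const hf
  rw [hsplit, measureReal_union hdisj hmeas.compl, probReal_compl_eq_one_sub hmeas]

lemma measure_lt_le_lintegral_exp_mul {Ω : Type*} [MeasurableSpace Ω] {P : Measure Ω} {f : Ω → ℝ}
    (hf : Measurable f) {c : ℝ} (hc : 0 ≤ c) (t : ℝ) :
    P {ω | t < f ω} ≤ (∫⁻ ω, ENNReal.ofReal (Real.exp (c * f ω)) ∂P)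
      * ENNReal.ofReal (Real.exp (-c * t)) := by
  have hmarkov := mul_meas_ge_le_lintegral (μ := P)
    (show Measurable fun ω => ENNReal.ofReal (Real.exp (c * f ω)) by fun_prop)
    (ENNReal.ofReal (Real.exp (c * t)))
  have hsub : {ω | t < f ω}
      ⊆ {ω | ENNReal.ofReal (Real.exp (c * t)) ≤ ENNReal.ofReal (Real.exp (c * f ω))} :=
    fun ω (hω : t < f ω) => ENNReal.ofReal_le_ofReal (Real.exp_le_exp.2 (by gcongr))
  rw [neg_mul, Real.exp_neg, ENNReal.ofReal_inv_of_pos (Real.exp_pos _), ← div_eq_mul_inv,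
    ENNReal.le_div_iff_mul_le (by simp [Real.exp_pos]) (by simp), mul_comm]
  exact le_trans (by gcongr) hmarkov

/-- Exponential Markov inequality makes the tails dominated, so that the layer-cake formula for the
moments passes to the limit. -/
lemma tendsto_lintegral_rpow_of_tendsto_measure_lt {ι : Type*} {L : Filter ι}
    [L.IsCountablyGenerated] {Ω : ι → Type*} [∀ i, MeasurableSpace (Ω i)]
    {P : ∀ i, Measure (Ω i)} {f : ∀ i, Ω i → ℝ} {Ω' : Type*} [MeasurableSpace Ω'] {Q : Measure Ω'}
    {g : Ω' → ℝ} {c β : ℝ} {C : ℝ≥0∞} (hf : ∀ i, Measurable (f i)) (hf0 : ∀ i ω, 0 ≤ f i ω)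
    (hg : Measurable g) (hg0 : ∀ ω, 0 ≤ g ω) (hc : 0 < c) (hβ : 0 < β) (hC : C ≠ ∞)
    (hexp : ∀ᶠ i in L, ∫⁻ ω, ENNReal.ofReal (Real.exp (c * f i ω)) ∂P i ≤ C)
    (htail : ∀ t > 0, Tendsto (fun i => P i {ω | t < f i ω}) L (𝓝 (Q {ω | t < g ω}))) :
    Tendsto (fun i => ∫⁻ ω, ENNReal.ofReal (f i ω ^ β) ∂P i) L
      (𝓝 (∫⁻ ω, ENNReal.ofReal (g ω ^ β) ∂Q)) := by
  simp only [lintegral_rpow_eq_lintegral_meas_lt_mul _ (ae_of_all _ (hf0 _)) (hf _).aemeasurable hβ,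
    lintegral_rpow_eq_lintegral_meas_lt_mul _ (ae_of_all _ hg0) hg.aemeasurable hβ]
  refine ENNReal.Tendsto.const_mul ?_ (Or.inr ENNReal.ofReal_ne_top)
  refine tendsto_lintegral_filter_of_dominated_convergence'
    (fun t => C * ENNReal.ofReal (t ^ (β - 1) * Real.exp (-c * t ^ (1 : ℝ)))) ?_ ?_ ?_ ?_
  · refine Eventually.of_forall fun i => AEMeasurable.mul (Antitone.measurable ?_).aemeasurable
      (by fun_prop)
    exact fun a b hab => measure_mono fun ω hω => hab.trans_lt hω
  · filter_upwards [hexp] with i hi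
    filter_upwards [ae_restrict_mem measurableSet_Ioi] with t (_ : 0 < t)
    rw [Real.rpow_one, mul_comm (t ^ (β - 1)), ENNReal.ofReal_mul (Real.exp_pos _).le, ← mul_assoc]
    gcongr
    exact (measure_lt_le_lintegral_exp_mul (hf i) hc.le t).trans (by gcongr)
  · rw [lintegral_const_mul' _ _ hC]
    exact ENNReal.mul_ne_top hC (integrableOn_rpow_mul_exp_neg_mul_rpow (by linarith)
      one_pos hc).lintegral_lt_top.ne
  · filter_upwards [ae_restrict_mem measurableSet_Ioi] with t ht
    exact ENNReal.Tendsto.mul_const (htail t ht) (Or.inr ENNReal.ofReal_ne_top)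

lemma integrable_abs_rpow_gaussianReal {β : ℝ} (hβ : 0 ≤ β) (μ : ℝ) (v : NNReal) :
    Integrable (fun z => |z| ^ β) (gaussianReal μ v) := by
  have := (memLp_id_gaussianReal (μ := μ) (v := v) β.toNNReal).integrable_norm_rpow'
  simpa [Real.coe_toNNReal _ hβ] using this

lemma integral_abs_rpow_gaussianReal {V β : ℝ} (hV : 0 < V) (hβ : 0 ≤ β) :
    ∫ z, |z| ^ β ∂(gaussianReal 0 V.toNNReal)
      = (2 * V) ^ (β / 2) * Real.pi ^ (-(1 : ℝ) / 2) * Real.Gamma ((β + 1) / 2) := by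
  have hdensity (z : ℝ) : gaussianPDFReal 0 V.toNNReal z * |z| ^ β
      = (√(2 * Real.pi * V))⁻¹ * (|z| ^ β * Real.exp (-(2 * V)⁻¹ * |z| ^ (2 : ℝ))) := by
    rw [gaussianPDFReal, Real.coe_toNNReal _ hV.le, Real.rpow_two, sq_abs, sub_zero, neg_div,
      div_eq_inv_mul, neg_mul]
    ring
  have hpow : (2 * V)⁻¹ ^ (-(β + 1) / 2) = (2 * V) ^ (β / 2) * √(2 * V) := by
    rw [Real.inv_rpow (by positivity), ← Real.rpow_neg (by positivity), Real.sqrt_eq_rpow,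
      ← Real.rpow_add (by positivity)]
    ring_nf
  have hsqrt : √(2 * Real.pi * V) = √(2 * V) * Real.pi ^ (1 / 2 : ℝ) := by
    rw [← Real.sqrt_eq_rpow, ← Real.sqrt_mul (by positivity)]
    ring_nf
  rw [integral_gaussianReal_eq_integral_smul (by simpa using hV)]
  simp only [smul_eq_mul, hdensity]
  rw [integral_const_mul,
    integral_comp_abs (f := fun y => y ^ β * Real.exp (-(2 * V)⁻¹ * y ^ (2 : ℝ))),
    integral_rpow_mul_exp_neg_mul_rpow two_pos (by linarith) (by positivity), hpow, hsqrt, neg_div,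
    Real.rpow_neg Real.pi_pos.le]
  field_simp

variable {π : Measure ℝ} {ℓ ρ : ℝ}

/-- The law of the number of steps: `m` is weighted by the share of the `m`-step term in the
renewal function at `x`. A probability measure once `0 ≤ x`. -/
def countLaw (π : Measure ℝ) (ρ x : ℝ) : Measure ℕ :=
  Measure.sum fun m => ENNReal.ofReal (renewalTerm π ρ m x / renewalFun π ρ x) • Measure.dirac m

variable [IsProbabilityMeasure π] (hℓ : 0 < ℓ) (hπ : ∀ᵐ s ∂π, ℓ ≤ s)

include hℓ hπ

lemma lintegral_countLaw (hρ : 0 ≤ ρ) (x : ℝ) {g : ℕ → ℝ} (hg : ∀ m, 0 ≤ g m) :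
    ∫⁻ m, ENNReal.ofReal (g m) ∂countLaw π ρ x
      = ENNReal.ofReal ((∑' m, renewalTerm π ρ m x * g m) / renewalFun π ρ x) := by
  have hmass (m : ℕ) : 0 ≤ renewalTerm π ρ m x / renewalFun π ρ x :=
    div_nonneg (renewalTerm_nonneg m x) (renewalFun_nonneg x)
  simp only [countLaw, lintegral_sum_measure, lintegral_smul_measure, lintegral_dirac, smul_eq_mul,
    ← ENNReal.ofReal_mul (hmass _), div_mul_eq_mul_div]
  rw [← ENNReal.ofReal_tsum_of_nonneg _ ((summable_renewalTerm_mul hℓ hπ hρ x g).div_const _),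
    tsum_div_const]
  exact fun m => div_mul_eq_mul_div (renewalTerm π ρ m x) _ (g m) ▸ mul_nonneg (hmass m) (hg m)

lemma lintegral_countLaw_abs_rpow (hρ : 0 ≤ ρ) (β : ℝ) {x : ℝ} (hx : 0 < x) (y : ℝ) :
    ∫⁻ m, ENNReal.ofReal (|(m - y) / √x| ^ β) ∂countLaw π ρ x
      = ENNReal.ofReal ((∑' m : ℕ, renewalTerm π ρ m x * |m - y| ^ β) / renewalFun π ρ x
        / x ^ (β / 2)) := by
  have hscale (m : ℕ) : |(m - y) / √x| ^ β = |m - y| ^ β / x ^ (β / 2) := by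
    rw [abs_div, abs_of_nonneg (Real.sqrt_nonneg x),
      Real.div_rpow (abs_nonneg _) (Real.sqrt_nonneg x), Real.sqrt_eq_rpow, ← Real.rpow_mul hx.le,
      one_div_mul_eq_div]
  rw [lintegral_countLaw hℓ hπ hρ x fun m => by positivity, div_right_comm]
  simp only [hscale, ← mul_div_assoc, tsum_div_const]

lemma countLaw_real_Ici (hρ : 0 ≤ ρ) (x : ℝ) (k : ℕ) :
    (countLaw π ρ x).real (Set.Ici k) = (∑' m, renewalTerm π ρ (m + k) x) / renewalFun π ρ x := by
  have htail : ∑' m, renewalTerm π ρ m x * (Set.Ici k).indicator 1 m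
      = ∑' m, renewalTerm π ρ (m + k) x := by
    rw [← (summable_renewalTerm_mul hℓ hπ hρ x _).sum_add_tsum_nat_add k, Finset.sum_eq_zero]
    · simp
    · intro m hm
      simp [Finset.mem_range.1 hm]
  have hind (m : ℕ) : (Set.Ici k).indicator (1 : ℕ → ℝ≥0∞) m
      = ENNReal.ofReal ((Set.Ici k).indicator 1 m) := by
    by_cases hm : k ≤ m <;> simp [hm]
  have hind0 (m : ℕ) : 0 ≤ (Set.Ici k).indicator (1 : ℕ → ℝ) m :=
    Set.indicator_nonneg (fun _ _ => zero_le_one) m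
  rw [measureReal_def, ← lintegral_indicator_one measurableSet_Ici, lintegral_congr hind,
    lintegral_countLaw hℓ hπ hρ x hind0, htail, ENNReal.toReal_ofReal]
  exact div_nonneg (tsum_nonneg fun m => renewalTerm_nonneg _ x) (renewalFun_nonneg x)

lemma isProbabilityMeasure_countLaw (hρ : 0 ≤ ρ) {x : ℝ} (hx : 0 ≤ x) :
    IsProbabilityMeasure (countLaw π ρ x) := by
  have hone : ∑' m, renewalTerm π ρ m x * 1 = renewalFun π ρ x := by
    simp only [mul_one, renewalFun]
  have := lintegral_countLaw hℓ hπ hρ x fun _ => zero_le_one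
  rw [hone, div_self (renewalFun_pos hℓ hπ hρ hx).ne'] at this
  exact ⟨by simpa using this⟩

section CentralLimit

variable (hatom : ∀ᵐ s ∂π, π {s} ≠ 0) (h2 : MemLp id 2 π) (hV : Var[id; π] ≠ 0) (hρ : 0 < ρ)

include hatom h2 hV hρ

lemma tendsto_countLaw_real_of_eventually_eq_Ici {z : ℝ} {s : ℝ → Set ℕ} {k : ℝ → ℕ}
    (hs : ∀ᶠ x in atTop, s x = Set.Ici (k x))
    (hk : ∀ᶠ x in atTop, x / (∫ s, s ∂π) + z * √x ≤ k x ∧ k x ≤ x / (∫ s, s ∂π) + z * √x + 1) :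
    Tendsto (fun x => (countLaw π ρ x).real (s x)) atTop
      (𝓝 ((gaussianReal 0 (Var[id; π] / (∫ s, s ∂π) ^ 3).toNNReal).real (Set.Ici z))) := by
  have hupper : Tendsto (fun x => z + (√x)⁻¹) atTop (𝓝 z) := by
    simpa using Real.tendsto_sqrt_atTop.inv_tendsto_atTop.const_add z
  have hscaled : Tendsto (fun x => (k x - x / ∫ s, s ∂π) / √x) atTop (𝓝 z) := by
    refine tendsto_of_tendsto_of_tendsto_of_le_of_le' tendsto_const_nhds hupper ?_ ?_
    · filter_upwards [hk, eventually_gt_atTop 0] with x hx hx0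
      exact (le_div_iff₀ (Real.sqrt_pos.2 hx0)).2 (by linarith)
    · filter_upwards [hk, eventually_gt_atTop 0] with x hx hx0
      have := Real.sqrt_pos.2 hx0
      rw [div_le_iff₀ this, add_mul, inv_mul_cancel₀ this.ne']
      linarith
  refine (tendsto_tsum_renewalTerm_div hℓ hπ hatom h2 hV hρ tendsto_id hscaled).congr' ?_
  filter_upwards [hs] with x hx
  rw [hx, countLaw_real_Ici hℓ hπ hρ.le, id]

omit hatom hV hρ in
lemma eventually_div_mean_add_mul_sqrt_nonneg (z : ℝ) :
    ∀ᶠ x in atTop, 0 ≤ x / (∫ s, s ∂π) + z * √x := by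
  have hM := mean_pos hℓ hπ (h2.integrable (by norm_num))
  filter_upwards [Real.tendsto_sqrt_atTop.eventually_ge_atTop (-z * ∫ s, s ∂π),
    eventually_ge_atTop 0] with x hx hx0
  have hfactor : x / (∫ s, s ∂π) + z * √x = √x * (√x / (∫ s, s ∂π) - -z) := by
    rw [mul_sub, ← mul_div_assoc, Real.mul_self_sqrt hx0]
    ring
  rw [hfactor]
  exact mul_nonneg (Real.sqrt_nonneg x) (sub_nonneg.2 ((le_div_iff₀ hM).2 hx))

lemma tendsto_countLaw_real_le (z : ℝ) :
    Tendsto (fun x => (countLaw π ρ x).real {m | z ≤ (m - x / ∫ s, s ∂π) / √x}) atTop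
      (𝓝 ((gaussianReal 0 (Var[id; π] / (∫ s, s ∂π) ^ 3).toNNReal).real (Set.Ici z))) := by
  refine tendsto_countLaw_real_of_eventually_eq_Ici hℓ hπ hatom h2 hV hρ
    (k := fun x => ⌈x / (∫ s, s ∂π) + z * √x⌉₊) ?_ ?_
  · filter_upwards [eventually_gt_atTop 0] with x hx
    ext m
    rw [Set.mem_ofPred_eq, le_div_iff₀ (Real.sqrt_pos.2 hx), Set.mem_Ici, Nat.ceil_le,
      le_sub_iff_add_le']
  · filter_upwards [eventually_div_mean_add_mul_sqrt_nonneg hℓ hπ h2 z] with x hx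
    exact ⟨Nat.le_ceil _, (Nat.ceil_lt_add_one hx).le⟩

lemma tendsto_countLaw_real_lt (z : ℝ) :
    Tendsto (fun x => (countLaw π ρ x).real {m | z < (m - x / ∫ s, s ∂π) / √x}) atTop
      (𝓝 ((gaussianReal 0 (Var[id; π] / (∫ s, s ∂π) ^ 3).toNNReal).real (Set.Ici z))) := by
  have hnonneg := eventually_div_mean_add_mul_sqrt_nonneg hℓ hπ h2 z
  refine tendsto_countLaw_real_of_eventually_eq_Ici hℓ hπ hatom h2 hV hρ
    (k := fun x => ⌊x / (∫ s, s ∂π) + z * √x⌋₊ + 1) ?_ ?_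
  · filter_upwards [hnonneg, eventually_gt_atTop 0] with x hx hx0
    ext m
    rw [Set.mem_ofPred_eq, lt_div_iff₀ (Real.sqrt_pos.2 hx0), Set.mem_Ici, Nat.add_one_le_iff,
      Nat.floor_lt hx, lt_sub_iff_add_lt']
  · filter_upwards [hnonneg] with x hx
    push_cast
    exact ⟨(Nat.lt_floor_add_one _).le, by linarith [Nat.floor_le hx]⟩

lemma tendsto_countLaw_lt_abs {t : ℝ} (ht : 0 < t) :
    Tendsto (fun x => countLaw π ρ x {m | t < |(m - x / ∫ s, s ∂π) / √x|}) atTop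
      (𝓝 (gaussianReal 0 (Var[id; π] / (∫ s, s ∂π) ^ 3).toNNReal {z | t < |z|})) := by
  have hM := mean_pos hℓ hπ (h2.integrable (by norm_num))
  have hVpos : 0 < Var[id; π] := (variance_nonneg _ _).lt_of_ne' hV
  set G := gaussianReal 0 (Var[id; π] / (∫ s, s ∂π) ^ 3).toNNReal with hG
  have : NullSingletonClass G :=
    nullSingletonClass_gaussianReal (Real.toNNReal_pos.2 (div_pos hVpos (pow_pos hM 3))).ne'
  have hlim := (tendsto_countLaw_real_lt hℓ hπ hatom h2 hV hρ t).add
    ((tendsto_countLaw_real_le hℓ hπ hatom h2 hV hρ (-t)).const_sub 1)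
  have hGt : G.real {z | t < |z|} = G.real (Set.Ici t) + (1 - G.real (Set.Ici (-t))) := by
    refine (measureReal_lt_abs measurable_id ht).trans ?_
    exact congrArg (· + _) (measureReal_congr Ioi_ae_eq_Ici)
  rw [← hG, ← hGt] at hlim
  have hlim' := (ENNReal.continuous_ofReal.tendsto _).comp hlim
  rw [ofReal_measureReal] at hlim'
  refine hlim'.congr' ?_
  filter_upwards [eventually_ge_atTop 0] with x hx
  have := isProbabilityMeasure_countLaw hℓ hπ hρ.le hx
  rw [Function.comp_apply, ← measureReal_lt_abs (by fun_prop) ht, ofReal_measureReal]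

end CentralLimit

section ExponentialIntegrability

variable (hatom : ∀ᵐ s ∂π, π {s} ≠ 0) (hexp : 0 ∈ interior (integrableExpSet id π)) (hρ : 0 < ρ)

include hatom hρ

lemma exists_eventually_le_renewalFun (hmean : Integrable (fun s => s) π) :
    ∃ c > 0, ∀ᶠ x in atTop, c ≤ renewalFun π ρ x := by
  obtain ⟨φ, hφ⟩ := exists_isRenewalProfile hℓ hπ hatom hmean hρ
  obtain ⟨c, hc, hcφ⟩ := hφ.exists_lower
  refine ⟨c / 2, half_pos hc, ?_⟩
  filter_upwards [hφ.tendsto_sub.eventually_const_le (neg_lt_zero.2 (half_pos hc))] with x hx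
  linarith [hcφ x]

include hexp

lemma exists_eventually_lintegral_countLaw_exp_le :
    ∃ C ≠ ∞, ∀ᶠ x in atTop, ∫⁻ m, ENNReal.ofReal
      (Real.exp ((∫ s, s ∂π) * |(m - x / ∫ s, s ∂π) / √x|)) ∂countLaw π ρ x ≤ C := by
  have hmean : Integrable (fun s => s) π :=
    (memLp_of_mem_interior_integrableExpSet hexp 1).integrable le_rfl
  have hM := mean_pos hℓ hπ hmean
  obtain ⟨c, hc, hcv⟩ := exists_eventually_le_renewalFun hℓ hπ hatom hρ hmean
  obtain ⟨C, hC⟩ := exists_eventually_tsum_renewalTerm_mul_exp_abs_le hℓ hπ hexp hρ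
  refine ⟨ENNReal.ofReal (C / c), ENNReal.ofReal_ne_top, ?_⟩
  filter_upwards [hcv, hC] with x hcx hCx
  have habs (m : ℕ) : (∫ s, s ∂π) * |(m - x / ∫ s, s ∂π) / √x|
      = |(√x)⁻¹ * (x - m * ∫ s, s ∂π)| := by
    have hlin : (√x)⁻¹ * (x - m * ∫ s, s ∂π)
        = -((∫ s, s ∂π) * ((m - x / ∫ s, s ∂π) / √x)) := by
      field_simp
      ring
    rw [hlin, abs_neg, abs_mul, abs_of_pos hM]
  rw [lintegral_countLaw hℓ hπ hρ.le x fun _ => (Real.exp_pos _).le]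
  simp only [habs]
  have hnonneg : 0 ≤ ∑' m : ℕ, renewalTerm π ρ m x * Real.exp |(√x)⁻¹ * (x - m * ∫ s, s ∂π)| :=
    tsum_nonneg fun m => mul_nonneg (renewalTerm_nonneg m x) (Real.exp_pos _).le
  exact ENNReal.ofReal_le_ofReal (div_le_div₀ (hnonneg.trans hCx) hCx hc hcx)

theorem tendsto_tsum_renewalTerm_mul_abs_rpow_div (hV : Var[id; π] ≠ 0) {β : ℝ} (hβ : 0 ≤ β) :
    Tendsto (fun x => (∑' m : ℕ, renewalTerm π ρ m x * |m - x / ∫ s, s ∂π| ^ β)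
        / renewalFun π ρ x / x ^ (β / 2)) atTop
      (𝓝 (∫ z, |z| ^ β ∂gaussianReal 0 (Var[id; π] / (∫ s, s ∂π) ^ 3).toNNReal)) := by
  have h2 : MemLp id 2 π := memLp_of_mem_interior_integrableExpSet hexp 2
  rcases hβ.eq_or_lt with rfl | hβ
  · simp only [Real.rpow_zero, integral_const, probReal_univ, smul_eq_mul, mul_one, zero_div,
      div_one]
    refine tendsto_const_nhds.congr' ?_
    filter_upwards [eventually_ge_atTop 0] with x hx
    exact (div_self (renewalFun_pos hℓ hπ hρ.le hx).ne').symm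
  obtain ⟨C, hC, hCx⟩ := exists_eventually_lintegral_countLaw_exp_le hℓ hπ hatom hexp hρ
  have hlim := tendsto_lintegral_rpow_of_tendsto_measure_lt (g := fun z => |z|)
    (fun _ => by fun_prop) (fun _ _ => abs_nonneg _) (by fun_prop) abs_nonneg
    (mean_pos hℓ hπ (h2.integrable (by norm_num))) hβ hC hCx
    fun t ht => tendsto_countLaw_lt_abs hℓ hπ hatom h2 hV hρ ht
  rw [← ofReal_integral_eq_lintegral_ofReal (integrable_abs_rpow_gaussianReal hβ.le _ _)
    (ae_of_all _ fun z => by positivity)] at hlim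
  have hreal := (ENNReal.tendsto_toReal ENNReal.ofReal_ne_top).comp hlim
  rw [ENNReal.toReal_ofReal (integral_nonneg fun z => by positivity)] at hreal
  refine hreal.congr' ?_
  filter_upwards [eventually_gt_atTop 0] with x hx
  rw [Function.comp_apply, lintegral_countLaw_abs_rpow hℓ hπ hρ.le _ hx, ENNReal.toReal_ofReal]
  exact div_nonneg (div_nonneg (tsum_nonneg fun m => mul_nonneg (renewalTerm_nonneg m x)
    (by positivity)) (renewalFun_nonneg x)) (by positivity)

end ExponentialIntegrability

end AbsoluteMoments

section Counting

variable {P : Set ℕ}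

lemma af_eq_zero_of_lt (hP : ∀ n ∈ P, 2 ≤ n) {m n : ℕ} (hn : n < 2 ^ m) : af P m n = 0 := by
  refine Nat.card_eq_zero.2 (Or.inl ⟨fun ⟨t, ht, hprod⟩ => hn.not_ge ?_⟩)
  simpa [hprod] using Finset.pow_card_le_prod Finset.univ t 2 fun i _ => hP _ (ht i)

lemma summable_af_mul (hP : ∀ n ∈ P, 2 ≤ n) (n : ℕ) (g : ℕ → ℝ) :
    Summable fun m => (af P m n : ℝ) * g m := by
  refine summable_of_ne_finset_zero (s := Finset.range n) fun m hm => ?_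
  have hlt : n < 2 ^ m := (not_lt.1 (Finset.mem_range.not.1 hm)).trans_lt m.lt_two_pow_self
  simp [af_eq_zero_of_lt hP hlt]

/-- The number of ordered `m`-tuples of elements of `P` with product at most `N`. -/
def cumCount (P : Set ℕ) (m N : ℕ) : ℕ := ∑ n ∈ Finset.Icc 1 N, af P m n

open Classical in
/-- The ordered `m`-tuples of elements of `P` with product at most `N`. The entries are required
to be at most `N` only to make the set visibly finite. -/
def boundedTuples (P : Set ℕ) (m N : ℕ) : Finset (Fin m → ℕ) :=
  {t ∈ Fintype.piFinset fun _ => {n ∈ Finset.Icc 1 N | n ∈ P} | ∏ i, t i ≤ N}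

lemma mem_boundedTuples (hP : ∀ n ∈ P, 0 < n) {m N : ℕ} {t : Fin m → ℕ} :
    t ∈ boundedTuples P m N ↔ (∀ i, t i ∈ P) ∧ ∏ i, t i ≤ N := by
  simp only [boundedTuples, Finset.mem_filter, Fintype.mem_piFinset, Finset.mem_Icc]
  refine ⟨fun ⟨ht, hN⟩ => ⟨fun i => (ht i).2, hN⟩, fun ⟨ht, hN⟩ => ⟨fun i => ?_, hN⟩⟩
  have hprod : 0 < ∏ i, t i := Finset.prod_pos fun j _ => hP _ (ht j)
  have hle : t i ≤ ∏ i, t i :=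
    Nat.le_of_dvd hprod (Finset.dvd_prod_of_mem t (Finset.mem_univ i))
  exact ⟨⟨hP _ (ht i), hle.trans hN⟩, ht i⟩

lemma cumCount_eq_card (hP : ∀ n ∈ P, 0 < n) (m N : ℕ) :
    cumCount P m N = (boundedTuples P m N).card := by
  rw [cumCount, Finset.card_eq_sum_card_fiberwise (f := fun t => ∏ i, t i)
    (t := Finset.Icc 1 N)]
  · refine Finset.sum_congr rfl fun n hn => Nat.subtype_card _ fun t => ?_
    rw [Finset.mem_filter, mem_boundedTuples hP]
    refine ⟨fun ⟨⟨ht, _⟩, hprod⟩ => ⟨ht, hprod⟩, fun ⟨ht, hprod⟩ => ⟨⟨ht, ?_⟩, hprod⟩⟩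
    exact hprod.trans_le (Finset.mem_Icc.1 hn).2
  · intro t ht
    obtain ⟨ht, hN⟩ := (mem_boundedTuples hP).1 ht
    exact Finset.mem_coe.2 (Finset.mem_Icc.2 ⟨Finset.prod_pos fun j _ => hP _ (ht j), hN⟩)

lemma cumCount_zero (P : Set ℕ) (N : ℕ) : cumCount P 0 N = if 1 ≤ N then 1 else 0 := by
  have haf (n : ℕ) : af P 0 n = if n = 1 then 1 else 0 := by
    split_ifs with h <;> simp [af, eq_comm, h]
  simp [cumCount, haf]

open Classical in
lemma card_filter_boundedTuples_head (hP : ∀ n ∈ P, 0 < n) (m N : ℕ) {p : ℕ} (hp : p ∈ P) :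
    {t ∈ boundedTuples P (m + 1) N | t 0 = p}.card = (boundedTuples P m (N / p)).card := by
  have hdiv {k : ℕ} : k ≤ N / p ↔ p * k ≤ N := by
    rw [Nat.le_div_iff_mul_le (hP p hp), mul_comm]
  symm
  refine Finset.card_bij (fun t _ => Fin.cons p t) (fun t ht => ?_)
    (fun t _ t' _ h => Fin.cons_right_injective (α := fun _ => ℕ) p h) fun u hu => ?_
  · rw [mem_boundedTuples hP, hdiv] at ht
    rw [Finset.mem_filter, mem_boundedTuples hP, Fin.prod_cons]
    exact ⟨⟨Fin.cases hp ht.1, ht.2⟩, Fin.cons_zero _ _⟩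
  · rw [Finset.mem_filter, mem_boundedTuples hP, Fin.prod_univ_succ] at hu
    obtain ⟨⟨huP, huN⟩, rfl⟩ := hu
    refine ⟨Fin.tail u, ?_, Fin.cons_self_tail u⟩
    rw [mem_boundedTuples hP, hdiv]
    exact ⟨fun i => huP i.succ, huN⟩

open Classical in
lemma cumCount_succ (hP : ∀ n ∈ P, 0 < n) (m N : ℕ) :
    cumCount P (m + 1) N = ∑ p ∈ Finset.Icc 1 N with p ∈ P, cumCount P m (N / p) := by
  rw [cumCount_eq_card hP, Finset.card_eq_sum_card_fiberwise (f := fun t => t 0)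
    (t := {p ∈ Finset.Icc 1 N | p ∈ P})]
  · refine Finset.sum_congr rfl fun p hp => ?_
    rw [cumCount_eq_card hP, card_filter_boundedTuples_head hP m N (Finset.mem_filter.1 hp).2]
  · intro t ht
    exact Fintype.mem_piFinset.1 (Finset.mem_filter.1 (Finset.mem_coe.1 ht)).1 0

lemma cumCount_succ_eq_tsum (hP : ∀ n ∈ P, 0 < n) (m N : ℕ) :
    (cumCount P (m + 1) N : ℝ) = ∑' p : P, (cumCount P m (N / p) : ℝ) := by
  classical
  rw [cumCount_succ hP, tsum_subtype P (fun p => (cumCount P m (N / p) : ℝ)),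
    tsum_eq_sum (s := Finset.Icc 1 N), Finset.sum_filter, Nat.cast_sum]
  · exact Finset.sum_congr rfl fun p _ => by by_cases hp : p ∈ P <;> simp [hp]
  · intro p hpN
    refine Set.indicator_apply_eq_zero.2 fun hp => ?_
    have hlt : N < p := by
      by_contra! hle
      exact hpN (Finset.mem_Icc.2 ⟨hP p hp, hle⟩)
    simp [Nat.div_eq_of_lt hlt, cumCount]

end Counting

section StepLaw

variable {P : Set ℕ} {ρ : ℝ}

/-- The law of `log p` for a random `p ∈ P` chosen with weight `p ^ (-ρ)`; it is a probability
measure exactly when `𝒫(ρ) = 1`. -/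
def stepLaw (P : Set ℕ) (ρ : ℝ) : Measure ℝ :=
  Measure.sum fun p : P => ENNReal.ofReal ((p : ℝ) ^ (-ρ)) • Measure.dirac (Real.log p)

lemma integral_stepLaw (P : Set ℕ) (ρ : ℝ) (f : ℝ → ℝ) :
    ∫ s, f s ∂(stepLaw P ρ) = ∑' p : P, (p : ℝ) ^ (-ρ) * f (Real.log p) := by
  rw [stepLaw, integral_sum_dirac fun _ => ENNReal.ofReal_ne_top]
  refine tsum_congr fun p => ?_
  rw [ENNReal.toReal_ofReal (by positivity), smul_eq_mul]

lemma ae_stepLaw {q : ℝ → Prop} (hq : ∀ p ∈ P, q (Real.log p)) : ∀ᵐ s ∂(stepLaw P ρ), q s := by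
  rw [stepLaw, Measure.ae_sum_iff]
  refine fun p => Measure.ae_smul_measure ?_ _
  rw [ae_dirac_eq]
  exact hq p p.2

lemma ae_log_two_le_stepLaw (hP : ∀ n ∈ P, 2 ≤ n) : ∀ᵐ s ∂(stepLaw P ρ), Real.log 2 ≤ s :=
  ae_stepLaw fun p hp => Real.log_le_log two_pos (by exact_mod_cast hP p hp)

lemma stepLaw_singleton_ne_zero {p : ℕ} (hp : p ∈ P) (hp0 : 0 < p) :
    stepLaw P ρ {Real.log p} ≠ 0 := by
  refine (lt_of_lt_of_le ?_ (Measure.le_sum (fun p : P => ENNReal.ofReal ((p : ℝ) ^ (-ρ)) •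
    Measure.dirac (Real.log p)) ⟨p, hp⟩ {Real.log p})).ne'
  simpa using Real.rpow_pos_of_pos (Nat.cast_pos.2 hp0) (-ρ)

lemma isProbabilityMeasure_stepLaw (hρ : Pval P ρ = 1) : IsProbabilityMeasure (stepLaw P ρ) := by
  have hsum : Summable fun p : P => (p : ℝ) ^ (-ρ) := by
    by_contra hns
    simp [Pval, tsum_eq_zero_of_not_summable hns] at hρ
  constructor
  rw [stepLaw, Measure.sum_apply _ MeasurableSet.univ]
  simp only [Measure.smul_apply, smul_eq_mul, measure_univ, mul_one]
  rw [← ENNReal.ofReal_tsum_of_nonneg (fun p => by positivity) hsum, ← Pval, hρ,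
    ENNReal.ofReal_one]

lemma zero_mem_interior_integrableExpSet_stepLaw (hP : ∀ n ∈ P, 0 < n)
    (hκ : kappa P < (ρ : EReal)) : 0 ∈ interior (integrableExpSet id (stepLaw P ρ)) := by
  obtain ⟨_, ⟨r, rfl, hr⟩, hrρ⟩ := sInf_lt_iff.1 hκ
  have hsub : Set.Iio (ρ - r) ⊆ integrableExpSet id (stepLaw P ρ) := by
    intro t ht
    refine integrable_sum_dirac (fun _ => ENNReal.ofReal_ne_top)
      (hr.of_nonneg_of_le (fun p => by positivity) fun p => ?_)
    have hp : (1 : ℝ) ≤ p := by exact_mod_cast hP p p.2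
    have hp0 : (0 : ℝ) < p := by linarith
    rw [ENNReal.toReal_ofReal (by positivity), Real.norm_of_nonneg (Real.exp_pos _).le, id,
      mul_comm t, ← Real.rpow_def_of_pos hp0, ← Real.rpow_add hp0]
    exact Real.rpow_le_rpow_of_exponent_le hp (by linarith [Set.mem_Iio.1 ht])
  exact interior_maximal hsub isOpen_Iio (sub_pos.2 (EReal.coe_lt_coe_iff.1 hrρ))

lemma integral_id_stepLaw (P : Set ℕ) (ρ : ℝ) : ∫ s, s ∂(stepLaw P ρ) = -Pderiv1 P ρ := by
  rw [integral_stepLaw P ρ fun s => s, Pderiv1, neg_neg]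

lemma mean_stepLaw_pos [IsProbabilityMeasure (stepLaw P ρ)] (hP : ∀ n ∈ P, 2 ≤ n)
    (hexp : 0 ∈ interior (integrableExpSet id (stepLaw P ρ))) : 0 < ∫ s, s ∂(stepLaw P ρ) :=
  mean_pos (Real.log_pos one_lt_two) (ae_log_two_le_stepLaw hP)
    ((memLp_of_mem_interior_integrableExpSet hexp 1).integrable le_rfl)

lemma variance_stepLaw [IsProbabilityMeasure (stepLaw P ρ)]
    (hexp : 0 ∈ interior (integrableExpSet id (stepLaw P ρ))) :
    Var[id; stepLaw P ρ] = Pderiv2 P ρ - (∫ s, s ∂(stepLaw P ρ)) ^ 2 := by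
  rw [variance_eq_sub (memLp_of_mem_interior_integrableExpSet hexp 2), Pderiv2]
  exact congrArg (· - _) (integral_stepLaw P ρ fun s => s ^ 2)

lemma variance_stepLaw_div_mean_pow_three [IsProbabilityMeasure (stepLaw P ρ)]
    (hexp : 0 ∈ interior (integrableExpSet id (stepLaw P ρ))) :
    Var[id; stepLaw P ρ] / (∫ s, s ∂(stepLaw P ρ)) ^ 3
      = (-1 / Pderiv1 P ρ) ^ 3 * Pderiv2 P ρ - -1 / Pderiv1 P ρ := by
  rw [variance_stepLaw hexp, integral_id_stepLaw]
  rcases eq_or_ne (Pderiv1 P ρ) 0 with h0 | h0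
  · simp [h0]
  · field_simp
    ring

lemma variance_stepLaw_ne_zero [IsProbabilityMeasure (stepLaw P ρ)] (hP : ∀ n ∈ P, 0 < n)
    (hP2 : P.Nontrivial) (hexp : 0 ∈ interior (integrableExpSet id (stepLaw P ρ))) :
    Var[id; stepLaw P ρ] ≠ 0 := by
  intro hV
  have hconst := ae_eq_integral_of_variance_eq_zero
    (memLp_of_mem_interior_integrableExpSet hexp 2) hV
  have hlog (p : ℕ) (hp : p ∈ P) : Real.log p = ∫ s, id s ∂(stepLaw P ρ) := by
    by_contra hne
    exact stepLaw_singleton_ne_zero hp (hP p hp)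
      (measure_mono_null (Set.singleton_subset_iff.2 hne) hconst)
  obtain ⟨p, hp, q, hq, hpq⟩ := hP2
  have hpos (p : ℕ) (hp : p ∈ P) : (p : ℝ) ∈ Set.Ioi 0 :=
    Set.mem_Ioi.2 (Nat.cast_pos.2 (hP p hp))
  exact hpq (Nat.cast_injective
    (Real.log_injOn_pos (hpos p hp) (hpos q hq) ((hlog p hp).trans (hlog q hq).symm)))

lemma renewalTerm_stepLaw [IsProbabilityMeasure (stepLaw P ρ)] (hP : ∀ n ∈ P, 0 < n)
    (hρ : 0 ≤ ρ) (m : ℕ) (x : ℝ) :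
    renewalTerm (stepLaw P ρ) ρ m x = Real.exp (-ρ * x) * cumCount P m ⌊Real.exp x⌋₊ := by
  induction m generalizing x with
  | zero =>
    simp only [renewalTerm_zero, cumCount_zero, Nat.one_le_floor_iff, Real.one_le_exp_iff]
    split_ifs with hx
    · rw [expDecay_of_nonneg hx, Nat.cast_one, mul_one]
    · rw [expDecay_of_neg (not_le.1 hx), Nat.cast_zero, mul_zero]
  | succ m ih =>
    rw [renewalTerm_succ hρ, stepAverage, integral_stepLaw, cumCount_succ_eq_tsum hP,
      ← tsum_mul_left]
    refine tsum_congr fun p => ?_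
    have hp : (0 : ℝ) < p := Nat.cast_pos.2 (hP p p.2)
    have hweight : (p : ℝ) ^ (-ρ) * Real.exp (-ρ * (x - Real.log p)) = Real.exp (-ρ * x) := by
      rw [Real.rpow_def_of_pos hp, ← Real.exp_add]
      ring_nf
    rw [ih, ← mul_assoc, hweight, ← Nat.floor_div_natCast, Real.exp_sub, Real.exp_log hp]

lemma tsum_renewalTerm_stepLaw_mul [IsProbabilityMeasure (stepLaw P ρ)] (hP : ∀ n ∈ P, 2 ≤ n)
    (hρ : 0 ≤ ρ) {N : ℕ} (hN : 0 < N) (g : ℕ → ℝ) :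
    ∑' m, renewalTerm (stepLaw P ρ) ρ m (Real.log N) * g m
      = Real.exp (-ρ * Real.log N) * ∑ n ∈ Finset.Icc 1 N, ∑' m, (af P m n : ℝ) * g m := by
  rw [← Summable.tsum_finsetSum fun n _ => summable_af_mul hP n g, ← tsum_mul_left]
  refine tsum_congr fun m => ?_
  rw [renewalTerm_stepLaw (fun n hn => two_pos.trans_le (hP n hn)) hρ,
    Real.exp_log (Nat.cast_pos.2 hN), Nat.floor_natCast, cumCount, ← Finset.sum_mul,
    Nat.cast_sum, mul_assoc]

lemma sum_tsum_af_mul_div_Acum [IsProbabilityMeasure (stepLaw P ρ)] (hP : ∀ n ∈ P, 2 ≤ n)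
    (hρ : 0 ≤ ρ) {N : ℕ} (hN : 0 < N) (g : ℕ → ℝ) :
    (∑ n ∈ Finset.Icc 1 N, ∑' m, (af P m n : ℝ) * g m) / Acum P N
      = (∑' m, renewalTerm (stepLaw P ρ) ρ m (Real.log N) * g m)
        / renewalFun (stepLaw P ρ) ρ (Real.log N) := by
  have hAcum : renewalFun (stepLaw P ρ) ρ (Real.log N)
      = Real.exp (-ρ * Real.log N) * Acum P N := by
    simpa [renewalFun, Acum, aTot] using tsum_renewalTerm_stepLaw_mul hP hρ hN fun _ => 1
  rw [hAcum, tsum_renewalTerm_stepLaw_mul hP hρ hN, mul_div_mul_left _ _ (Real.exp_pos _).ne']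

theorem tendsto_sum_tsum_af_mul_abs_rpow_div [IsProbabilityMeasure (stepLaw P ρ)]
    (hP : ∀ n ∈ P, 2 ≤ n) (hρ : 0 < ρ)
    (hexp : 0 ∈ interior (integrableExpSet id (stepLaw P ρ)))
    (hV : Var[id; stepLaw P ρ] ≠ 0) {β : ℝ} (hβ : 0 ≤ β) :
    Tendsto (fun N : ℕ => (∑ n ∈ Finset.Icc 1 N,
        ∑' m : ℕ, (af P m n : ℝ) * |m - (∫ s, s ∂(stepLaw P ρ))⁻¹ * Real.log N| ^ β) / Acum P N
          / Real.log N ^ (β / 2)) atTop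
      (𝓝 (∫ z, |z| ^ β ∂gaussianReal 0
        (Var[id; stepLaw P ρ] / (∫ s, s ∂(stepLaw P ρ)) ^ 3).toNNReal)) := by
  have hatom : ∀ᵐ s ∂(stepLaw P ρ), stepLaw P ρ {s} ≠ 0 :=
    ae_stepLaw fun p hp => stepLaw_singleton_ne_zero hp (two_pos.trans_le (hP p hp))
  refine ((tendsto_tsum_renewalTerm_mul_abs_rpow_div (Real.log_pos one_lt_two)
    (ae_log_two_le_stepLaw hP) hatom hexp hρ hV hβ).comp
      (Real.tendsto_log_atTop.comp tendsto_natCast_atTop_atTop)).congr' ?_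
  filter_upwards [eventually_gt_atTop 0] with N hN
  simp only [Function.comp, div_eq_inv_mul (Real.log N)]
  rw [sum_tsum_af_mul_div_Acum hP hρ.le hN]

end StepLaw

lemma isEquivalent_const_mul_of_tendsto_div {α : Type*} {l : Filter α} {u w : α → ℝ} {c : ℝ}
    (hc : c ≠ 0) (hw : ∀ᶠ x in l, w x ≠ 0) (h : Tendsto (fun x => u x / w x) l (𝓝 c)) :
    u ~[l] fun x => c * w x := by
  refine (((isEquivalent_const_iff_tendsto hc).2 h).mul (IsEquivalent.refl (u := w))).congr_left ?_
  filter_upwards [hw] with x hx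
  exact div_mul_cancel₀ _ hx

lemma two_mul_sq_rpow_div_two {σ : ℝ} (hσ : 0 ≤ σ) (β : ℝ) :
    (2 * σ ^ 2) ^ (β / 2) = 2 ^ (β / 2) * σ ^ β := by
  rw [Real.mul_rpow two_pos.le (sq_nonneg σ), ← Real.rpow_natCast, ← Real.rpow_mul hσ]
  congr 2
  push_cast
  ring

end OrderedFactorization

/-- **Absolute central moments.** Under the stated assumptions, for every real `β ≥ 0`,
`E|Y_N - μ log N|^β ∼ 2^{β/2} π^{-1/2} Γ((β+1)/2) σ^β (log N)^{β/2}` as `N → ∞`. -/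
theorem absolute_central_moments
    (P : Set ℕ) (hP : ∀ n ∈ P, 2 ≤ n) (hP2 : P.Nontrivial)
    (hκ : 1 < PvalE P (kappa P))
    (ρ : ℝ) (hρ0 : 0 < ρ) (hρκ : kappa P < (ρ : EReal)) (hρ1 : Pval P ρ = 1)
    (μ σ : ℝ) (hμ : μ = -1 / Pderiv1 P ρ)
    (hσ0 : 0 ≤ σ) (hσ : σ ^ 2 = μ ^ 3 * Pderiv2 P ρ - μ)
    (β : ℝ) (hβ : 0 ≤ β) :
    Asymptotics.IsEquivalent atTop
      (fun N : ℕ =>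
        (∑ n ∈ Finset.Icc 1 N,
            ∑' m : ℕ, (af P m n : ℝ) * |(m : ℝ) - μ * Real.log N| ^ β) / Acum P N)
      (fun N : ℕ =>
        (2 : ℝ) ^ (β / 2) * Real.pi ^ (-(1 : ℝ) / 2) * Real.Gamma ((β + 1) / 2)
          * σ ^ β * (Real.log N) ^ (β / 2)) := by
  open OrderedFactorization MeasureTheory ProbabilityTheory Topology in
  have hP0 : ∀ n ∈ P, 0 < n := fun n hn => two_pos.trans_le (hP n hn)
  have := isProbabilityMeasure_stepLaw hρ1
  have hexp := zero_mem_interior_integrableExpSet_stepLaw hP0 hρκ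
  have hV := variance_stepLaw_ne_zero hP0 hP2 hexp
  have hμ' : μ = (∫ s, s ∂(stepLaw P ρ))⁻¹ := by
    rw [hμ, integral_id_stepLaw, inv_neg, neg_div, one_div]
  have hσ' : σ ^ 2 = Var[id; stepLaw P ρ] / (∫ s, s ∂(stepLaw P ρ)) ^ 3 := by
    rw [variance_stepLaw_div_mean_pow_three hexp, hσ, hμ]
  have hσ2 : 0 < σ ^ 2 := hσ' ▸ div_pos ((variance_nonneg id _).lt_of_ne' hV)
    (pow_pos (mean_stepLaw_pos hP hexp) 3)
  have hσpos : 0 < σ := hσ0.lt_of_ne' (sq_pos_iff.1 hσ2)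
  refine isEquivalent_const_mul_of_tendsto_div ?_ ?_ ?_
  · have := Real.Gamma_pos_of_pos (show 0 < (β + 1) / 2 by linarith)
    have := Real.pi_pos
    positivity
  · filter_upwards [eventually_gt_atTop 1] with N hN
    exact (Real.rpow_pos_of_pos (Real.log_pos (Nat.one_lt_cast.2 hN)) _).ne'
  · have hlim := tendsto_sum_tsum_af_mul_abs_rpow_div hP hρ0 hexp hV hβ
    rw [← hμ', ← hσ', integral_abs_rpow_gaussianReal hσ2 hβ] at hlim
    rwa [two_mul_sq_rpow_div_two hσ0, mul_right_comm _ (σ ^ β),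
      mul_right_comm _ (σ ^ β)] at hlim
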